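/- arXiv:2008.10044 — 2 statements merged into one kernel-verified Lean document; each statement's English description precedes it below -/
import Mathlib

section
/- Let A be a Nakayama algebra. Then fin-pro A = max over the simple modules S of e(S), where e(S) = min{pd S, pd IS}. -/
open CategoryTheory CategoryTheory.Limits

noncomputable section

namespace ArtinAlg

variable (A : Type) [Ring A]

/-- `M` admits a projective resolution of length at most `n`. -/
inductive ProjDimLE : ℕ → ModuleCat.{0} A → Prop
  | zero (M : ModuleCat.{0} A) (h : Projective M) : ProjDimLE 0 M
  | succ (n : ℕ) (M P : ModuleCat.{0} A) (f : P ⟶ M) (hP : Projective P) (hf : Epi f)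
      (h : ProjDimLE n (kernel f)) : ProjDimLE (n + 1) M

/-- `M` admits an injective coresolution of length at most `n`. -/
inductive InjDimLE : ℕ → ModuleCat.{0} A → Prop
  | zero (M : ModuleCat.{0} A) (h : Injective M) : InjDimLE 0 M
  | succ (n : ℕ) (M I : ModuleCat.{0} A) (f : M ⟶ I) (hI : Injective I) (hf : Mono f)
      (h : InjDimLE n (cokernel f)) : InjDimLE (n + 1) M

/-- The projective dimension `pd M ∈ ℕ∞`. -/
def projDim (M : ModuleCat.{0} A) : ℕ∞ :=
  sInf {d : ℕ∞ | ∃ n : ℕ, d = n ∧ ProjDimLE A n M}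

/-- The injective dimension `id M ∈ ℕ∞`. -/
def injDim (M : ModuleCat.{0} A) : ℕ∞ :=
  sInf {d : ℕ∞ | ∃ n : ℕ, d = n ∧ InjDimLE A n M}

/-- `f : P ⟶ M` is a projective cover: `P` is projective and `f` is an essential
(superfluous) epimorphism. -/
def IsProjectiveCoverHom {P M : ModuleCat.{0} A} (f : P ⟶ M) : Prop :=
  Projective P ∧ Epi f ∧ ∀ (N : ModuleCat.{0} A) (g : N ⟶ P), Epi (g ≫ f) → Epi g

/-- `P` is a projective cover of `M`. -/
def IsProjCoverOf (M P : ModuleCat.{0} A) : Prop :=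
  ∃ f : P ⟶ M, IsProjectiveCoverHom A f

/-- `f : M ⟶ I` is an injective envelope: `I` is injective and `f` is an essential
monomorphism. -/
def IsInjectiveEnvelopeHom {M I : ModuleCat.{0} A} (f : M ⟶ I) : Prop :=
  Injective I ∧ Mono f ∧ ∀ (N : ModuleCat.{0} A) (g : I ⟶ N), Mono (f ≫ g) → Mono g

/-- `I` is an injective envelope of `M`. -/
def IsInjEnvOf (M I : ModuleCat.{0} A) : Prop :=
  ∃ f : M ⟶ I, IsInjectiveEnvelopeHom A f

/-- `X ≅ Ω M`, the kernel of a projective cover of `M`. -/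
def IsSyzygyOf (M X : ModuleCat.{0} A) : Prop :=
  ∃ (P : ModuleCat.{0} A) (f : P ⟶ M), IsProjectiveCoverHom A f ∧ Nonempty (X ≅ kernel f)

/-- `X ≅ Σ M`, the cokernel of an injective envelope of `M`. -/
def IsCosyzygyOf (M X : ModuleCat.{0} A) : Prop :=
  ∃ (I : ModuleCat.{0} A) (f : M ⟶ I), IsInjectiveEnvelopeHom A f ∧ Nonempty (X ≅ cokernel f)

/-- `X ≅ Ω^n M`. -/
def IsNthSyzygy : ℕ → ModuleCat.{0} A → ModuleCat.{0} A → Prop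
  | 0, M, X => Nonempty (X ≅ M)
  | n + 1, M, X => ∃ Y, IsSyzygyOf A M Y ∧ IsNthSyzygy n Y X

/-- `X ≅ Σ^n M`. -/
def IsNthCosyzygy : ℕ → ModuleCat.{0} A → ModuleCat.{0} A → Prop
  | 0, M, X => Nonempty (X ≅ M)
  | n + 1, M, X => ∃ Y, IsCosyzygyOf A M Y ∧ IsNthCosyzygy n Y X

/-- `X` is a direct summand of `Y`. -/
def IsDirectSummandOf (X Y : ModuleCat.{0} A) : Prop :=
  ∃ (i : X ⟶ Y) (r : Y ⟶ X), i ≫ r = 𝟙 X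

/-- `X ∈ add W` : `X` is a direct summand of a finite direct sum of copies of `W`. -/
def InAdd (X W : ModuleCat.{0} A) : Prop :=
  ∃ n : ℕ, IsDirectSummandOf A X (ModuleCat.of A (Fin n → ↥W))

/-- The delooping level of `M` is at most `d` :
`Ω^d M ∈ add (A ⊕ Ω^{d+1} M')` for some finitely generated `M'`. -/
def DelLE (d : ℕ) (M : ModuleCat.{0} A) : Prop :=
  ∃ X, IsNthSyzygy A d M X ∧
    ∃ M' : ModuleCat.{0} A, Module.Finite A ↥M' ∧
      ∃ X', IsNthSyzygy A (d + 1) M' X' ∧ InAdd A X (ModuleCat.of A (A × ↥X'))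

/-- The delooping level `del M ∈ ℕ∞`. -/
def delLevel (M : ModuleCat.{0} A) : ℕ∞ :=
  sInf {d : ℕ∞ | ∃ n : ℕ, d = n ∧ DelLE A n M}

/-- The delooping level of the algebra: the supremum of `del S` over the simple modules. -/
def delAlg : ℕ∞ :=
  sSup {d : ℕ∞ | ∃ S : ModuleCat.{0} A, IsSimpleModule A ↥S ∧ delLevel A S = d}

/-- `Q` is a minimal injective cogenerator: the injective envelope of the direct sum of
a complete set of representatives of the simple modules. -/
def IsMinimalInjectiveCogenerator (Q : ModuleCat.{0} A) : Prop :=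
  ∃ (ι : Type) (_ : Fintype ι) (S : ι → ModuleCat.{0} A),
    (∀ i, IsSimpleModule A ↥(S i)) ∧
    (∀ T : ModuleCat.{0} A, IsSimpleModule A ↥T → ∃! i, Nonempty (↥T ≃ₗ[A] ↥(S i))) ∧
    IsInjEnvOf A (ModuleCat.of A (∀ i, ↥(S i))) Q

/-- The desuspending level of `M` is at most `d` :
`Σ^d M ∈ add (D(A) ⊕ Σ^{d+1} M')` for some finitely generated `M'`. -/
def DesLE (d : ℕ) (M : ModuleCat.{0} A) : Prop :=
  ∃ X, IsNthCosyzygy A d M X ∧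
    ∃ Q, IsMinimalInjectiveCogenerator A Q ∧
      ∃ M' : ModuleCat.{0} A, Module.Finite A ↥M' ∧
        ∃ X', IsNthCosyzygy A (d + 1) M' X' ∧ InAdd A X (ModuleCat.of A (↥Q × ↥X'))

/-- The desuspending level `des M ∈ ℕ∞`. -/
def desLevel (M : ModuleCat.{0} A) : ℕ∞ :=
  sInf {d : ℕ∞ | ∃ n : ℕ, d = n ∧ DesLE A n M}

/-- The desuspending level of the algebra. -/
def desAlg : ℕ∞ :=
  sSup {d : ℕ∞ | ∃ S : ModuleCat.{0} A, IsSimpleModule A ↥S ∧ desLevel A S = d}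

/-- The (small) finitistic projective dimension `fin-pro A`. -/
def finProDim : ℕ∞ :=
  sSup {d : ℕ∞ | ∃ M : ModuleCat.{0} A, Module.Finite A ↥M ∧ projDim A M = d ∧ d ≠ ⊤}

/-- The (small) finitistic injective dimension `fin-inj A`. -/
def finInjDim : ℕ∞ :=
  sSup {d : ℕ∞ | ∃ M : ModuleCat.{0} A, Module.Finite A ↥M ∧ injDim A M = d ∧ d ≠ ⊤}

/-- The big finitistic projective dimension `Fin-pro A`. -/
def bigFinProDim : ℕ∞ :=
  sSup {d : ℕ∞ | ∃ M : ModuleCat.{0} A, projDim A M = d ∧ d ≠ ⊤}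

/-- The big finitistic injective dimension `Fin-inj A`. -/
def bigFinInjDim : ℕ∞ :=
  sSup {d : ℕ∞ | ∃ M : ModuleCat.{0} A, injDim A M = d ∧ d ≠ ⊤}

/-- `M` is an indecomposable nonzero module. -/
def Indec (M : ModuleCat.{0} A) : Prop :=
  Nontrivial ↥M ∧ ∀ (N₁ N₂ : Submodule A ↥M), IsCompl N₁ N₂ → N₁ = ⊥ ∨ N₂ = ⊥

/-- `M` is serial (uniserial): its submodules form a chain. -/
def IsUniserial (M : ModuleCat.{0} A) : Prop :=
  ∀ N₁ N₂ : Submodule A ↥M, N₁ ≤ N₂ ∨ N₂ ≤ N₁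

/-- `A` is a Nakayama algebra: all finitely generated indecomposable modules are serial. -/
def IsNakayama : Prop :=
  ∀ M : ModuleCat.{0} A, Module.Finite A ↥M → Indec A M → IsUniserial A M

/-- `A` is connected: it is not a nontrivial product of algebras. -/
def IsConnectedAlgebra : Prop :=
  Nontrivial A ∧ ∀ e : A, IsIdempotentElem e → e ∈ Set.center A → e = 0 ∨ e = 1

/-- `A` is a cyclic Nakayama algebra: connected Nakayama with no simple projective module. -/
def IsCyclicNakayama : Prop :=
  IsNakayama A ∧ IsConnectedAlgebra A ∧
    ¬ ∃ S : ModuleCat.{0} A, IsSimpleModule A ↥S ∧ Projective S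

/-- `T ≅ top M` (and `top M` is simple): there is an essential epimorphism `M ⟶ T`. -/
def IsSimpleTopOf (M T : ModuleCat.{0} A) : Prop :=
  IsSimpleModule A ↥T ∧
    ∃ f : M ⟶ T, Epi f ∧ ∀ (N : ModuleCat.{0} A) (g : N ⟶ M), Epi (g ≫ f) → Epi g

/-- `S ≅ soc M` (and `soc M` is simple): there is an essential monomorphism `S ⟶ M`. -/
def IsSimpleSocOf (M S : ModuleCat.{0} A) : Prop :=
  IsSimpleModule A ↥S ∧
    ∃ f : S ⟶ M, Mono f ∧ ∀ (N : ModuleCat.{0} A) (g : M ⟶ N), Mono (f ≫ g) → Mono g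

/-- `0 ⟶ N ⟶ E ⟶ M ⟶ 0` is an almost split (Auslander-Reiten) sequence. -/
def IsAlmostSplitSeq {N E M : ModuleCat.{0} A} (f : N ⟶ E) (g : E ⟶ M) : Prop :=
  Mono f ∧ Epi g ∧ (∃ w : f ≫ g = 0, (ShortComplex.mk f g w).Exact) ∧
  (¬ ∃ s : M ⟶ E, s ≫ g = 𝟙 M) ∧ Indec A N ∧ Indec A M ∧
  ∀ (X : ModuleCat.{0} A) (h : X ⟶ M), (¬ ∃ s : M ⟶ X, s ≫ h = 𝟙 M) → ∃ h' : X ⟶ E, h' ≫ g = h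

/-- `N ≅ τ M`, the Auslander-Reiten translate of `M` : there is an almost split sequence
`0 ⟶ N ⟶ E ⟶ M ⟶ 0`. -/
def IsTauOf (N M : ModuleCat.{0} A) : Prop :=
  ∃ (E : ModuleCat.{0} A) (f : N ⟶ E) (g : E ⟶ M), IsAlmostSplitSeq A f g

/-- `U ≅ ψ S = τ⁻ top (I S)`. -/
def IsPsiOf (S U : ModuleCat.{0} A) : Prop :=
  ∃ I, IsInjEnvOf A S I ∧ ∃ T, IsSimpleTopOf A I T ∧ IsTauOf A T U

/-- `T ≅ γ S = τ soc (P S)`. -/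
def IsGammaOf (S T : ModuleCat.{0} A) : Prop :=
  ∃ P, IsProjCoverOf A S P ∧ ∃ U, IsSimpleSocOf A P U ∧ IsTauOf A T U

/-- `T ≅ φ S = top (I S)`. -/
def IsPhiOf (S T : ModuleCat.{0} A) : Prop :=
  ∃ I, IsInjEnvOf A S I ∧ IsSimpleTopOf A I T

/-- There is a `ψ`-path `(S_1, …, S_m)` of cardinality `m` ending in `S`. -/
def PsiPathTo (m : ℕ) (S : ModuleCat.{0} A) : Prop :=
  1 ≤ m ∧ ∃ c : ℕ → ModuleCat.{0} A,
    (∀ i < m, IsSimpleModule A ↥(c i)) ∧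
    (∀ i, i + 1 < m → IsPsiOf A (c i) (c (i + 1))) ∧
    Nonempty (c (m - 1) ≅ S)

/-- `a(S)`: the supremum of the cardinalities of `ψ`-paths ending in `S`. -/
def aVal (S : ModuleCat.{0} A) : ℕ∞ :=
  sSup {d : ℕ∞ | ∃ m : ℕ, d = m ∧ PsiPathTo A m S}

/-- `a(A)`: the maximum of `a(S)` over the simple modules which are not `ψ`-cyclic. -/
def aAlg : ℕ∞ :=
  sSup {d : ℕ∞ | ∃ S : ModuleCat.{0} A, IsSimpleModule A ↥S ∧ aVal A S ≠ ⊤ ∧ aVal A S = d}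

/-- `S` is a composition factor of `M`: a simple subquotient of `M`. -/
def IsCompFactorOf (S M : ModuleCat.{0} A) : Prop :=
  IsSimpleModule A ↥S ∧ ∃ N' N : Submodule A ↥M, N' ≤ N ∧
    Nonempty ((↥N ⧸ N'.comap N.subtype) ≃ₗ[A] ↥S)

/-- `e(S) = min {pd S, pd (I S)} = x`. -/
def ERelVal (S : ModuleCat.{0} A) (x : ℕ∞) : Prop :=
  ∃ I, IsInjEnvOf A S I ∧ x = min (projDim A S) (projDim A I)

/-- `e*(S) = min {id S, id (P S)} = x`. -/
def EStarVal (S : ModuleCat.{0} A) (x : ℕ∞) : Prop :=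
  ∃ P, IsProjCoverOf A S P ∧ x = min (injDim A S) (injDim A P)

/-- `T = h(S) = top (Ω^{e(S)} N S)`, the homological permutation. -/
def HRel (S T : ModuleCat.{0} A) : Prop :=
  IsSimpleModule A ↥S ∧ IsSimpleModule A ↥T ∧
  ∃ z : ℕ, ERelVal A S z ∧
    ∃ N, ((Odd z ∧ N = S) ∨ (Even z ∧ IsInjEnvOf A S N)) ∧
      ∃ X, IsNthSyzygy A z N X ∧ IsSimpleTopOf A X T

/-- `S = h*(T) = soc (Σ^{e*(T)} N* T)`, the inverse homological permutation. -/
def HStarRel (T S : ModuleCat.{0} A) : Prop :=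
  IsSimpleModule A ↥T ∧ IsSimpleModule A ↥S ∧
  ∃ z : ℕ, EStarVal A T z ∧
    ∃ N, ((Odd z ∧ N = T) ∨ (Even z ∧ IsProjCoverOf A T N)) ∧
      ∃ X, IsNthCosyzygy A z N X ∧ IsSimpleSocOf A X S

/-- The `t`-fold relational iterate of a relation on modules (up to isomorphism). -/
def IterRel (r : ModuleCat.{0} A → ModuleCat.{0} A → Prop) :
    ℕ → ModuleCat.{0} A → ModuleCat.{0} A → Prop
  | 0, X, Y => Nonempty (X ≅ Y)
  | n + 1, X, Y => ∃ Z, r X Z ∧ IterRel r n Z Y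

end ArtinAlg

namespace NakComb

/-- Combinatorial model: `D p n a b` says that the interval module `[a,b)` has `pd ≤ n`. -/
def D (p : ℤ → ℤ) : ℕ → ℤ → ℤ → Prop
  | 0, a, b => a = b ∨ b = p a
  | n + 1, a, b => D p n b (p a)

lemma D_even (p : ℤ → ℤ) (k : ℕ) (a b : ℤ) :
    D p (2 * k) a b ↔ p^[k] a = p^[k] b ∨ p^[k] b = p^[k + 1] a := by
  induction k generalizing a b with
  | zero => simp [D]
  | succ k ih => exact ih (p a) (p b)

lemma D_odd (p : ℤ → ℤ) (k : ℕ) (a b : ℤ) :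
    D p (2 * k + 1) a b ↔ p^[k] b = p^[k + 1] a ∨ p^[k + 1] a = p^[k + 1] b :=
  D_even p k b (p a)

variable {p : ℤ → ℤ} {N : ℕ}

lemma per_mul (hper : ∀ i, p (i + N) = p i + N) (i m : ℤ) : p (i + m * N) = p i + m * N := by
  induction m using Int.induction_on with
  | zero => simp
  | succ m ih =>
    have : i + ((m : ℤ) + 1) * N = (i + m * N) + N := by ring
    rw [this, hper, ih]; ring
  | pred m ih =>
    have h := hper (i + (-(m : ℤ) - 1) * N)
    have : i + (-(m : ℤ) - 1) * N + N = i + -(m : ℤ) * N := by ring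
    rw [this, ih] at h
    linarith

lemma per_iter (hper : ∀ i, p (i + N) = p i + N) (k : ℕ) (i : ℤ) :
    p^[k] (i + N) = p^[k] i + N := by
  induction k generalizing i with
  | zero => simp
  | succ k ih => rw [Function.iterate_succ_apply, hper, ih, Function.iterate_succ_apply]

lemma fiberMin (hN : 0 < N) {f : ℤ → ℤ} (hm : Monotone f) (hper : ∀ i, f (i + N) = f i + N)
    (b : ℤ) : ∃ j ≤ b, f j = f b ∧ f (j - 1) < f j := by
  obtain ⟨j, hj, hmin⟩ := Int.exists_least_of_bdd (P := fun j => f j = f b)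
    ⟨b - N, fun z hz => by
      by_contra hlt
      push Not at hlt
      have h1 := hm hlt.le
      have h2 := hper (b - N)
      rw [sub_add_cancel] at h2
      omega⟩ ⟨b, rfl⟩
  refine ⟨j, hmin b rfl, hj, lt_of_le_of_ne (hm (by omega)) fun h => ?_⟩
  have := hmin (j - 1) (h.trans hj)
  omega

lemma inj_of_stab (hN : 0 < N) (hper : ∀ i, p (i + N) = p i + N) (k : ℕ)
    (hs : ∀ x, ∃ y, p^[k] x = p^[k + 1] y) {x y : ℤ}
    (h : p (p^[k] x) = p (p^[k] y)) : p^[k] x = p^[k] y := by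
  classical
  have hN' : (0 : ℤ) < N := by exact_mod_cast hN
  let X : Set ℤ := Set.range p^[k]
  have hX : ∀ z m : ℤ, z ∈ X → z + m * N ∈ X := by
    rintro _ m ⟨w, rfl⟩
    exact ⟨w + m * N, per_mul (per_iter hper k) w m⟩
  have hmod : ∀ z : ℤ, z ∈ X → z % N ∈ X := by
    intro z hz
    have := hX z (-(z / N)) hz
    rwa [show z + -(z / N) * N = z % N by rw [Int.emod_def]; ring] at this
  have hpmod : ∀ z : ℤ, p (z % N) % N = p z % N := by
    intro z
    have := per_mul hper z (-(z / N))
    rw [show z + -(z / N) * N = z % N by rw [Int.emod_def]; ring] at this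
    rw [this, Int.add_mul_emod_self_right]
  let T : Finset ℤ := (Finset.Ico (0 : ℤ) N).filter (· ∈ X)
  have hT : ∀ z, z ∈ T ↔ (0 ≤ z ∧ z < N) ∧ z ∈ X := by intro z; simp [T]
  have hTmod : ∀ z ∈ X, z % N ∈ T := fun z hz =>
    (hT _).2 ⟨⟨Int.emod_nonneg _ hN'.ne', Int.emod_lt_of_pos _ hN'⟩, hmod z hz⟩
  have hsurj : Set.SurjOn (fun z => p z % N) (T : Set ℤ) (T : Set ℤ) := by
    intro z hz
    obtain ⟨⟨h0, h1⟩, w, rfl⟩ := (hT z).1 hz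
    obtain ⟨u, hu⟩ := hs w
    rw [Function.iterate_succ_apply'] at hu
    refine ⟨p^[k] u % N, hTmod _ ⟨u, rfl⟩, ?_⟩
    simp only
    rw [hpmod, ← hu, Int.emod_eq_of_lt h0 h1]
  have hinj := Finset.injOn_of_surjOn_of_card_le (s := T) (t := T) (fun z => p z % N)
    (fun z hz => by
      obtain ⟨⟨h0, h1⟩, w, rfl⟩ := (hT z).1 hz
      exact hTmod _ ⟨p w, by rw [← Function.iterate_succ_apply, Function.iterate_succ_apply']⟩)
    hsurj le_rfl
  have key : p^[k] x % N = p^[k] y % N := by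
    apply hinj (hTmod _ ⟨x, rfl⟩) (hTmod _ ⟨y, rfl⟩)
    simp only
    rw [hpmod, hpmod, h]
  obtain ⟨m, hm⟩ := Int.modEq_iff_dvd.1 key
  have h2 : p^[k] y = p^[k] x + m * N := by linarith
  have h3 := per_mul hper (p^[k] x) m
  rw [← h2, ← h] at h3
  linarith

lemma exists_stab (hN : 0 < N) (hper : ∀ i, p (i + N) = p i + N) :
    ∃ k, ∀ x, ∃ y, p^[k] x = p^[k + 1] y := by
  classical
  have hN' : (0 : ℤ) < N := by exact_mod_cast hN
  let T : ℕ → Finset ℤ := fun k => (Finset.Ico (0 : ℤ) N).filter (· ∈ Set.range p^[k])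
  have hanti : Antitone T := by
    refine antitone_nat_of_succ_le fun k z hz => ?_
    simp only [T, Finset.mem_filter] at hz ⊢
    obtain ⟨hz, w, rfl⟩ := hz
    exact ⟨hz, p w, rfl⟩
  obtain ⟨k, hk⟩ := WellFoundedGT.monotone_chain_condition (α := (Finset ℤ)ᵒᵈ)
    ⟨fun k => OrderDual.toDual (T k), hanti⟩
  refine ⟨k, fun x => ?_⟩
  have hTk : T k = T (k + 1) := hk (k + 1) (by omega)
  set z := p^[k] x with hz
  have h1 : z + -(z / N) * N = z % N := by rw [Int.emod_def]; ring
  have h2 : z % N ∈ T k := by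
    simp only [T, Finset.mem_filter, Finset.mem_Ico]
    refine ⟨⟨Int.emod_nonneg _ hN'.ne', Int.emod_lt_of_pos _ hN'⟩, x + -(z / N) * N, ?_⟩
    rw [per_mul (per_iter hper k), ← hz, h1]
  rw [hTk] at h2
  simp only [T, Finset.mem_filter] at h2
  obtain ⟨-, w, hw⟩ := h2
  refine ⟨w + (z / N) * N, ?_⟩
  rw [per_mul (per_iter hper (k + 1)), hw, ← h1]; ring

theorem upper (hN : 0 < N) (hm : Monotone p) (hper : ∀ i, p (i + N) = p i + N)
    (n : ℕ) {a b : ℤ} (h1 : D p (n + 1) a b) (h0 : ¬ D p n a b) (hb : b ≤ p a) :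
    ∃ j, ∀ c, c < j → j ≤ p c → ¬ D p n c j := by
  by_contra hcon
  push Not at hcon
  rcases Nat.even_or_odd' n with ⟨k, rfl | rfl⟩
  · rw [D_odd] at h1
    rw [D_even] at h0
    push Not at h0
    have hs : ∀ x, ∃ y, p^[k] x = p^[k + 1] y := by
      intro x
      obtain ⟨j, -, hj, hlt⟩ := fiberMin hN (hm.iterate k) (per_iter hper k) x
      obtain ⟨c, hc, -, hD⟩ := hcon j
      rw [D_even] at hD
      rcases hD with hD | hD
      · have := hm.iterate k (show c ≤ j - 1 by omega)
        omega
      · exact ⟨c, hj ▸ hD⟩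
    rcases h1 with h1 | h1
    · exact h0.2 h1
    · rw [Function.iterate_succ_apply', Function.iterate_succ_apply'] at h1
      exact h0.1 (inj_of_stab hN hper k hs h1)
  · rw [show 2 * k + 1 + 1 = 2 * (k + 1) by ring, D_even] at h1
    rw [D_odd] at h0
    push Not at h0
    have hs' : ∀ j, p^[k + 1] (j - 1) < p^[k + 1] j → ∃ y, p^[k] j = p^[k + 1] y := by
      intro j hlt
      obtain ⟨c, hc, -, hD⟩ := hcon j
      rw [D_odd] at hD
      rcases hD with hD | hD
      · exact ⟨c, hD⟩
      · have := hm.iterate (k + 1) (show c ≤ j - 1 by omega)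
        omega
    have hs : ∀ x, ∃ y, p^[k + 1] x = p^[k + 1 + 1] y := by
      intro x
      obtain ⟨j, -, hj, hlt⟩ := fiberMin hN (hm.iterate (k + 1)) (per_iter hper (k + 1)) x
      obtain ⟨y, hy⟩ := hs' j hlt
      refine ⟨y, ?_⟩
      rw [← hj, Function.iterate_succ_apply', hy, Function.iterate_succ_apply' _ (k + 1)]
    rcases h1 with h1 | h1
    · exact h0.2 h1
    · obtain ⟨j, hjb, hj, hlt⟩ := fiberMin hN (hm.iterate (k + 1)) (per_iter hper (k + 1)) b
      obtain ⟨y, hy⟩ := hs' j hlt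
      have e1 : p (p^[k + 1] y) = p (p^[k + 1] a) := by
        rw [← hy, ← Function.iterate_succ_apply' p k, hj, h1, Function.iterate_succ_apply']
      have e2 := inj_of_stab hN hper (k + 1) hs e1
      have e3 := hm.iterate k hjb
      have e4 := hm.iterate k hb
      rw [← Function.iterate_succ_apply, Nat.succ_eq_add_one] at e4
      have : p^[k] b = p^[k + 1] a := by omega
      exact h0.1 this

theorem finite (hN : 0 < N) (hm : Monotone p) (hper : ∀ i, p (i + N) = p i + N) (j : ℤ) :
    ∃ n, D p n (j - 1) j ∨ ∀ c, c < j → j ≤ p c → p (c - 1) < j → D p n c j := by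
  obtain ⟨k, hk⟩ := exists_stab hN hper
  refine ⟨2 * k, ?_⟩
  by_cases h : p^[k] (j - 1) = p^[k] j
  · left; rw [D_even]; exact Or.inl h
  right
  intro c hc hjc hc1
  rw [D_even]
  right
  obtain ⟨z, hz⟩ := hk j
  have e1 := hm.iterate k hjc
  rw [← Function.iterate_succ_apply, Nat.succ_eq_add_one] at e1
  by_cases hzc : c ≤ z
  · have := hm.iterate (k + 1) hzc
    omega
  · exfalso
    have e2 := hm.iterate (k + 1) (show z ≤ c - 1 by omega)
    have e3 := hm.iterate k (show p (c - 1) ≤ j - 1 by omega)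
    rw [← Function.iterate_succ_apply, Nat.succ_eq_add_one] at e3
    have e4 := hm.iterate k (show j - 1 ≤ j by omega)
    omega

end NakComb
namespace NakMod

open Function

variable (A : Type) [Ring A]

/-- Uniserial module: the submodules form a chain. -/
def Uni (M : Type) [AddCommGroup M] [Module A M] : Prop :=
  ∀ N₁ N₂ : Submodule A M, N₁ ≤ N₂ ∨ N₂ ≤ N₁

/-- No nontrivial direct sum decomposition. -/
def Ind (M : Type) [AddCommGroup M] [Module A M] : Prop :=
  ∀ N₁ N₂ : Submodule A M, IsCompl N₁ N₂ → N₁ = ⊥ ∨ N₂ = ⊥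

/-- Nakayama condition, unbundled. -/
def NakT : Prop :=
  ∀ (M : Type) [AddCommGroup M] [Module A M] [Module.Finite A M] [Nontrivial M],
    Ind A M → Uni A M

/-- Natural number valued length. -/
def len (M : Type) [AddCommGroup M] [Module A M] : ℕ := (Module.length A M).toNat

variable {A}
variable {M N P : Type} [AddCommGroup M] [Module A M] [AddCommGroup N] [Module A N]
  [AddCommGroup P] [Module A P]

lemma Uni.of_injective (h : Uni A N) (f : M →ₗ[A] N) (hf : Injective f) : Uni A M := by
  intro N₁ N₂
  rcases h (N₁.map f) (N₂.map f) with h | h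
  · exact Or.inl ((Submodule.map_le_map_iff_of_injective hf _ _).1 h)
  · exact Or.inr ((Submodule.map_le_map_iff_of_injective hf _ _).1 h)

lemma Uni.of_surjective (h : Uni A M) (f : M →ₗ[A] N) (hf : Surjective f) : Uni A N := by
  intro N₁ N₂
  rcases h (N₁.comap f) (N₂.comap f) with h | h
  · exact Or.inl ((Submodule.comap_le_comap_iff_of_surjective hf).1 h)
  · exact Or.inr ((Submodule.comap_le_comap_iff_of_surjective hf).1 h)

lemma Uni.coatom_eq (h : Uni A M) {K L : Submodule A M} (hK : IsCoatom K) (hL : IsCoatom L) :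
    K = L := by
  rcases h K L with h | h
  · rcases hK.le_iff.1 h with h' | h'
    · exact absurd h' hL.1
    · exact h'.symm
  · rcases hL.le_iff.1 h with h' | h'
    · exact absurd h' hK.1
    · exact h'

lemma Uni.eq_top_of_not_le (h : Uni A M) {K L : Submodule A M} (hK : IsCoatom K)
    (hL : ¬ L ≤ K) : L = ⊤ := by
  rcases h K L with h' | h'
  · rcases hK.le_iff.1 h' with h2 | h2
    · exact h2
    · exact absurd h2.le hL
  · exact absurd h' hL

lemma Uni.ind (h : Uni A M) : Ind A M := by
  intro N₁ N₂ hc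
  rcases h N₁ N₂ with h | h
  · exact Or.inl (hc.disjoint.eq_bot_of_le h)
  · exact Or.inr (hc.disjoint.symm.eq_bot_of_le h)

section FL

variable [IsArtinianRing A]

lemma coe_len (M : Type) [AddCommGroup M] [Module A M] [Module.Finite A M] :
    (len A M : ℕ∞) = Module.length A M :=
  ENat.natCast_toNat_eq_self.2 Module.length_ne_top

lemma len_add [Module.Finite A M] (f : N →ₗ[A] M) (g : M →ₗ[A] P) (hf : Injective f)
    (hg : Surjective g) (H : Exact f g) : len A M = len A N + len A P := by
  have : Module.Finite A N := Module.Finite.of_injective f hf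
  have : Module.Finite A P := Module.Finite.of_surjective g hg
  have h := Module.length_eq_add_of_exact f g hf hg H
  rw [← coe_len, ← coe_len, ← coe_len] at h
  exact_mod_cast h

lemma len_quot [Module.Finite A M] (K : Submodule A M) : len A M = len A K + len A (M ⧸ K) :=
  len_add K.subtype K.mkQ K.subtype_injective K.mkQ_surjective
    (LinearMap.exact_subtype_mkQ K)

lemma len_ker [Module.Finite A M] (f : M →ₗ[A] N) (hf : Surjective f) :
    len A M = len A (LinearMap.ker f) + len A N :=
  len_add (LinearMap.ker f).subtype f (Submodule.subtype_injective _) hf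
    (LinearMap.exact_subtype_ker_map f)

lemma len_equiv (e : M ≃ₗ[A] N) : len A M = len A N := by rw [len, len, e.length_eq]

lemma len_eq_zero [Module.Finite A M] : len A M = 0 ↔ Subsingleton M := by
  rw [← Module.length_eq_zero_iff (R := A), ← coe_len]; norm_cast

lemma len_eq_one [Module.Finite A M] : len A M = 1 ↔ IsSimpleModule A M := by
  rw [← Module.length_eq_one_iff, ← coe_len]; norm_cast

lemma len_simple (M : Type) [AddCommGroup M] [Module A M] [IsSimpleModule A M] : len A M = 1 := by
  rw [len, Module.length_eq_one]; rfl

lemma len_lt [Module.Finite A M] {K : Submodule A M} (h : K ≠ ⊤) : len A K < len A M := by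
  have := Submodule.length_lt h
  rw [← coe_len, ← coe_len] at this
  exact_mod_cast this

lemma len_lt_of_lt [Module.Finite A M] {K L : Submodule A M} (h : K < L) :
    len A K < len A L := by
  have := Submodule.height_strictMono h
  rw [← Module.length_submodule, ← Module.length_submodule, ← coe_len, ← coe_len] at this
  exact_mod_cast this

lemma Uni.eq_of_len (h : Uni A M) [Module.Finite A M] {K L : Submodule A M}
    (hl : len A K = len A L) : K = L := by
  rcases h K L with h | h
  · by_contra hne
    exact absurd (len_lt_of_lt (lt_of_le_of_ne h hne)) (by omega)
  · by_contra hne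
    exact absurd (len_lt_of_lt (lt_of_le_of_ne h (Ne.symm hne))) (by omega)

lemma len_le_of_surj [Module.Finite A M] (f : M →ₗ[A] N) (hf : Surjective f) :
    len A N ≤ len A M := by
  rw [len_ker f hf]; omega

lemma Uni.finite (h : Uni A M) : Module.Finite A M := by
  have hfin : ∀ x : M, Module.Finite A (Submodule.span A {x}) := fun x => inferInstance
  have hb : ∀ x : M, len A (Submodule.span A {x}) ≤ len A A := by
    intro x
    apply len_le_of_surj ((LinearMap.toSpanSingleton A M x).codRestrict _
      (fun a => Submodule.mem_span_singleton.2 ⟨a, by simp⟩))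
    rintro ⟨y, hy⟩
    obtain ⟨a, rfl⟩ := Submodule.mem_span_singleton.1 hy
    exact ⟨a, by ext; simp⟩
  have hbdd : BddAbove (Set.range fun x : M => len A (Submodule.span A {x})) :=
    ⟨len A A, by rintro _ ⟨x, rfl⟩; exact hb x⟩
  obtain ⟨x, hx⟩ := Nat.sSup_mem (Set.range_nonempty _) hbdd
  have hmax : ∀ y : M, len A (Submodule.span A {y}) ≤ len A (Submodule.span A {x}) := by
    intro y
    simp only at hx
    rw [hx]
    exact le_csSup hbdd ⟨y, rfl⟩
  have htop : Submodule.span A {x} = ⊤ := by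
    rw [eq_top_iff]
    intro y _
    rcases h (Submodule.span A {x}) (Submodule.span A {y}) with h1 | h1
    · have hx' : x ∈ Submodule.span A {y} := h1 (Submodule.mem_span_singleton_self x)
      by_contra hy
      have hne : Submodule.comap (Submodule.span A {y}).subtype (Submodule.span A {x}) ≠ ⊤ := by
        intro he
        exact hy (by
          have : (⟨y, Submodule.mem_span_singleton_self y⟩ : Submodule.span A {y}) ∈
            Submodule.comap (Submodule.span A {y}).subtype (Submodule.span A {x}) := by
              rw [he]; trivial
          exact this)
      have h2 := len_lt hne
      rw [len_equiv (Submodule.comapSubtypeEquivOfLe h1)] at h2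
      have := hmax y
      omega
    · exact h1 (Submodule.mem_span_singleton_self y)
  rw [Module.finite_def, ← htop]
  exact Submodule.fg_span_singleton x

end FL

lemma uni_of_ess (hA : NakT A) {S : Submodule A M} (hS : S ≠ ⊥)
    (hess : ∀ K : Submodule A M, K ≠ ⊥ → S ≤ K) : Uni A M := by
  intro N₁ N₂
  by_contra hcon
  push Not at hcon
  obtain ⟨h1, h2⟩ := hcon
  obtain ⟨x, hx1, hx2⟩ := Set.not_subset.1 h1
  obtain ⟨y, hy1, hy2⟩ := Set.not_subset.1 h2
  let F : Submodule A M := Submodule.span A {x, y}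
  have hxF : x ∈ F := Submodule.subset_span (by simp)
  have hyF : y ∈ F := Submodule.subset_span (by simp)
  have : Module.Finite A F := Module.Finite.span_of_finite A (by simp)
  have : Nontrivial F := by
    refine ⟨⟨x, hxF⟩, 0, fun h => hx2 ?_⟩
    have : x = 0 := congrArg Subtype.val h
    rw [this]; exact N₂.zero_mem
  have hU : Uni A F := hA F (by
    intro K₁ K₂ hc
    by_contra hcon
    push Not at hcon
    have hm : ∀ K : Submodule A F, K ≠ ⊥ → S ≤ K.map F.subtype := by
      intro K hK
      apply hess
      intro h0
      exact hK (Submodule.map_injective_of_injective F.subtype_injective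
        (h0.trans (Submodule.map_bot _).symm))
    apply hS
    rw [eq_bot_iff]
    intro s hs
    obtain ⟨k1, hk1, e1⟩ := hm K₁ hcon.1 hs
    obtain ⟨k2, hk2, e2⟩ := hm K₂ hcon.2 hs
    have : k1 = k2 := F.subtype_injective (e1.trans e2.symm)
    have h0 := (Submodule.disjoint_def.1 hc.disjoint) k1 hk1 (this ▸ hk2)
    rw [h0] at e1
    simp at e1
    simp [← e1])
  rcases hU (N₁.comap F.subtype) (N₂.comap F.subtype) with h | h
  · exact hx2 (h (show (⟨x, hxF⟩ : F) ∈ N₁.comap F.subtype from hx1))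
  · exact hy2 (h (show (⟨y, hyF⟩ : F) ∈ N₂.comap F.subtype from hy1))

/-- Injective envelope of a simple module. -/
lemma exists_env [IsArtinianRing A] (hA : NakT A) (S : Type) [AddCommGroup S] [Module A S]
    [IsSimpleModule A S] :
    ∃ (E : Type) (_ : AddCommGroup E) (_ : Module A E) (f : S →ₗ[A] E), Module.Injective A E ∧
      Injective f ∧ ∀ K : Submodule A E, K ≠ ⊥ → LinearMap.range f ≤ K := by
  let J := CategoryTheory.Injective.under (ModuleCat.of A S)
  let i : S →ₗ[A] J := (CategoryTheory.Injective.ι (ModuleCat.of A S)).hom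
  have hi : Injective i := (ModuleCat.mono_iff_injective _).1
    (inferInstanceAs (CategoryTheory.Mono (CategoryTheory.Injective.ι (ModuleCat.of A S))))
  have hJ : Module.Injective A J := (Module.injective_iff_injective_object A J).2
    (inferInstanceAs (CategoryTheory.Injective (CategoryTheory.Injective.under (ModuleCat.of A S))))
  have : Nontrivial S := IsSimpleModule.nontrivial A S
  obtain ⟨s, hs⟩ := exists_ne (0 : S)
  have hspan : ∀ t : S, t ∈ Submodule.span A {s} := by
    intro t
    rw [IsSimpleModule.span_singleton_eq_top A hs]; trivial
  obtain ⟨C, -, hC⟩ := zorn_le_nonempty₀ {C : Submodule A J | i s ∉ C} (by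
    intro c hc hchain y hy
    refine ⟨sSup c, ?_, fun z hz => le_sSup hz⟩
    intro hmem
    obtain ⟨D, hD, hsD⟩ := (Submodule.mem_sSup_of_directed ⟨y, hy⟩ hchain.directedOn).1 hmem
    exact hc hD hsD) ⊥ (by
      intro h
      exact hs (hi (by simpa using h)))
  let f : S →ₗ[A] (J ⧸ C) := C.mkQ ∘ₗ i
  have hfs : f s ≠ 0 := by
    intro h
    exact hC.prop ((Submodule.Quotient.mk_eq_zero C).1 h)
  have hess : ∀ K : Submodule A (J ⧸ C), K ≠ ⊥ → LinearMap.range f ≤ K := by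
    intro K hK
    have hle : C ≤ K.comap C.mkQ := by
      intro x hx
      have : C.mkQ x = 0 := (Submodule.Quotient.mk_eq_zero C).2 hx
      rw [Submodule.mem_comap, this]; exact K.zero_mem
    have hmem : i s ∈ K.comap C.mkQ := by
      by_contra hn
      have hge := hC.le_of_ge hn hle
      apply hK
      rw [eq_bot_iff]
      intro x hx
      obtain ⟨x, rfl⟩ := C.mkQ_surjective x
      exact (Submodule.Quotient.mk_eq_zero C).2 (hge hx)
    rintro _ ⟨t, rfl⟩
    obtain ⟨a, rfl⟩ := Submodule.mem_span_singleton.1 (hspan t)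
    rw [map_smul]
    exact K.smul_mem a hmem
  have hinjOf : ∀ (Q : Type) [AddCommGroup Q] [Module A Q] (g : (J ⧸ C) →ₗ[A] Q),
      g (f s) ≠ 0 → Injective g := by
    intro Q _ _ g hg
    rw [← LinearMap.ker_eq_bot]
    by_contra hk
    exact hg (hess _ hk ⟨s, rfl⟩)
  have hf : Injective f := (LinearMap.injective_or_eq_zero f).resolve_right
    (fun h => hfs (by rw [h]; rfl))
  have hne : LinearMap.range f ≠ ⊥ := by
    intro h
    apply hfs
    have : f s ∈ LinearMap.range f := ⟨s, rfl⟩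
    rw [h] at this
    simpa using this
  have hU : Uni A (J ⧸ C) := uni_of_ess hA hne hess
  have : Module.Finite A (J ⧸ C) := hU.finite
  obtain ⟨g, hg⟩ := hJ.out f hf i
  have hbij := IsArtinian.bijective_of_injective_endomorphism (C.mkQ ∘ₗ g)
    (hinjOf _ _ (by
      rw [LinearMap.comp_apply, hg]; exact hfs))
  let e := LinearEquiv.ofBijective _ hbij
  refine ⟨J ⧸ C, inferInstance, inferInstance, f, ⟨?_⟩, hf, hess⟩
  intro X Y _ _ _ _ u hu w
  obtain ⟨h, hh⟩ := hJ.out u hu (g ∘ₗ e.symm.toLinearMap ∘ₗ w)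
  refine ⟨C.mkQ ∘ₗ h, fun x => ?_⟩
  rw [LinearMap.comp_apply, hh]
  exact e.apply_symm_apply (w x)

end NakMod
namespace NakMod

open Function

variable {A : Type} [Ring A]

lemma fin_simples_aux {M : Type} [AddCommGroup M] [Module A M] (h : IsFiniteLength A M) :
    ∃ L : List (ModuleCat.{0} A), (∀ X ∈ L, IsSimpleModule A X) ∧
      ∀ (T : Type) [AddCommGroup T] [Module A T] [IsSimpleModule A T] (f : M →ₗ[A] T), f ≠ 0 →
        ∃ X ∈ L, Nonempty (T ≃ₗ[A] X) := by
  induction h with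
  | of_subsingleton =>
    exact ⟨[], by simp, fun T _ _ _ f hf => absurd (Subsingleton.elim f 0) hf⟩
  | @of_simple_quotient M _ _ N hN _ ih =>
    obtain ⟨L, hL, hT⟩ := ih
    refine ⟨ModuleCat.of A (M ⧸ N) :: L, ?_, ?_⟩
    · intro X hX
      rcases List.mem_cons.1 hX with rfl | hX
      · exact hN
      · exact hL X hX
    · intro T _ _ _ f hf
      by_cases h0 : f ∘ₗ N.subtype = 0
      · have hle : N ≤ LinearMap.ker f := fun x hx => LinearMap.congr_fun h0 ⟨x, hx⟩
        have hne : N.liftQ f hle ≠ 0 := by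
          intro h
          apply hf
          rw [← N.liftQ_mkQ f hle, h, LinearMap.zero_comp]
        exact ⟨_, List.mem_cons_self,
          ⟨(LinearEquiv.ofBijective _ (LinearMap.bijective_of_ne_zero hne)).symm⟩⟩
      · obtain ⟨X, hX, e⟩ := hT T _ h0
        exact ⟨X, List.mem_cons_of_mem _ hX, e⟩

variable [IsArtinianRing A]

lemma fin_simples : ∃ (V : Type) (_ : Finite V) (S : V → ModuleCat.{0} A),
    (∀ v, IsSimpleModule A (S v)) ∧
    (∀ (T : Type) [AddCommGroup T] [Module A T] [IsSimpleModule A T],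
      ∃ v, Nonempty (T ≃ₗ[A] S v)) ∧
    (∀ v w, Nonempty (S v ≃ₗ[A] S w) → v = w) := by
  obtain ⟨L, hL, hT⟩ := fin_simples_aux (A := A) (M := A)
    ((isArtinianRing_iff_isFiniteLength A).1 inferInstance)
  let r : Setoid (Fin L.length) :=
    { r := fun i j => Nonempty (L.get i ≃ₗ[A] L.get j)
      iseqv := ⟨fun i => ⟨LinearEquiv.refl A _⟩, fun ⟨e⟩ => ⟨e.symm⟩,
        fun ⟨e⟩ ⟨e'⟩ => ⟨e.trans e'⟩⟩ }
  refine ⟨Quotient r, inferInstance, fun v => L.get v.out, fun v => hL _ (List.get_mem _ _),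
    ?_, ?_⟩
  · intro T _ _ _
    have : Nontrivial T := IsSimpleModule.nontrivial A T
    obtain ⟨t, ht⟩ := exists_ne (0 : T)
    obtain ⟨X, hX, ⟨e⟩⟩ := hT T (LinearMap.toSpanSingleton A T t) (by
      intro h
      apply ht
      have := LinearMap.congr_fun h 1
      simpa using this)
    obtain ⟨i, rfl⟩ := List.get_of_mem hX
    obtain ⟨e'⟩ : Nonempty (L.get i ≃ₗ[A] L.get (Quotient.mk r i).out) :=
      r.symm (Quotient.mk_out i)
    exact ⟨Quotient.mk r i, ⟨e.trans e'⟩⟩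
  · intro v w h
    rw [← Quotient.out_eq v, ← Quotient.out_eq w]
    exact Quotient.sound h

lemma exists_cover (hA : NakT A) (S : Type) [AddCommGroup S] [Module A S] [IsSimpleModule A S] :
    ∃ P : ModuleCat.{0} A, Module.Projective A P ∧ Module.Finite A P ∧ Nontrivial P ∧
      Uni A P ∧ ∃ π : P →ₗ[A] S, Surjective π := by
  suffices H : ∀ n, ∀ (P : Type) [AddCommGroup P] [Module A P] [Module.Projective A P]
      [Module.Finite A P] (f : P →ₗ[A] S), f ≠ 0 → len A P = n →
      ∃ P : ModuleCat.{0} A, Module.Projective A P ∧ Module.Finite A P ∧ Nontrivial P ∧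
      Uni A P ∧ ∃ π : P →ₗ[A] S, Surjective π by
    have : Nontrivial S := IsSimpleModule.nontrivial A S
    obtain ⟨t, ht⟩ := exists_ne (0 : S)
    refine H _ A (LinearMap.toSpanSingleton A S t) ?_ rfl
    intro h
    apply ht
    have := LinearMap.congr_fun h 1
    simpa using this
  intro n
  induction n using Nat.strong_induction_on with
  | _ n ih =>
  intro P _ _ _ _ f hf hn
  have : Nontrivial P := by
    by_contra h
    rw [not_nontrivial_iff_subsingleton] at h
    exact hf (Subsingleton.elim _ _)
  by_cases hind : Ind A P
  · exact ⟨ModuleCat.of A P, ‹_›, ‹_›, ‹_›, hA P hind, f,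
      (LinearMap.surjective_or_eq_zero f).resolve_right hf⟩
  · unfold Ind at hind
    push Not at hind
    obtain ⟨N₁, N₂, hc, h1, h2⟩ := hind
    have key : ∀ N N' : Submodule A P, IsCompl N N' → N' ≠ ⊥ → f ∘ₗ N.subtype ≠ 0 →
        ∃ P : ModuleCat.{0} A, Module.Projective A P ∧ Module.Finite A P ∧ Nontrivial P ∧
        Uni A P ∧ ∃ π : P →ₗ[A] S, Surjective π := by
      intro N N' hc hN' hne
      have : Module.Projective A N := Module.Projective.of_split N.subtype
        (N.projectionOnto N' hc) (by ext x; simp)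
      refine ih (len A N) ?_ N _ hne rfl
      rw [← hn]
      apply len_lt
      rintro rfl
      exact hN' (by simpa using hc.inf_eq_bot)
    by_cases h3 : f ∘ₗ N₁.subtype = 0
    · by_cases h4 : f ∘ₗ N₂.subtype = 0
      · exfalso
        apply hf
        rw [← LinearMap.ker_eq_top, eq_top_iff, ← hc.sup_eq_top]
        exact sup_le (fun x hx => LinearMap.congr_fun h3 ⟨x, hx⟩)
          (fun x hx => LinearMap.congr_fun h4 ⟨x, hx⟩)
      · exact key N₂ N₁ hc.symm h1 h4
    · exact key N₁ N₂ hc h2 h3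

/-- The combinatorial data of a Nakayama algebra. -/
structure Dat (A : Type) [Ring A] where
  V : Type
  fin : Finite V
  P : V → ModuleCat.{0} A
  proj : ∀ v, Module.Projective A (P v)
  fg : ∀ v, Module.Finite A (P v)
  nt : ∀ v, Nontrivial (P v)
  uni : ∀ v, Uni A (P v)
  cover : ∀ (M : Type) [AddCommGroup M] [Module A M] [Module.Finite A M] [Nontrivial M],
    Uni A M → ∃ v, ∃ f : P v →ₗ[A] M, Surjective f
  unique : ∀ (v w : V) (M : Type) [AddCommGroup M] [Module A M] [Nontrivial M]
    (f : P v →ₗ[A] M) (g : P w →ₗ[A] M), Surjective f → Surjective g → v = w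
  τ : Equiv.Perm V
  τ_spec : ∀ v (K : Submodule A (P v)), IsCoatom K → K ≠ ⊥ →
    ∃ f : P (τ v) →ₗ[A] K, Surjective f

lemma exists_coatom (M : Type) [AddCommGroup M] [Module A M] [Module.Finite A M] [Nontrivial M] :
    ∃ K : Submodule A M, IsCoatom K := by
  obtain h | ⟨K, hK, -⟩ := eq_top_or_exists_le_coatom (⊥ : Submodule A M)
  · exact absurd h bot_ne_top
  · exact ⟨K, hK⟩

lemma comap_coatom {M N : Type} [AddCommGroup M] [Module A M] [AddCommGroup N] [Module A N]
    (f : M →ₗ[A] N) (hf : Surjective f) {K : Submodule A N} (hK : IsCoatom K) :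
    IsCoatom (K.comap f) := by
  have : IsSimpleModule A (N ⧸ K) := isSimpleModule_iff_isCoatom.2 hK
  have h2 : K.comap f = LinearMap.ker (K.mkQ ∘ₗ f) := by
    rw [LinearMap.ker_comp, Submodule.ker_mkQ]
  rw [h2]
  exact LinearMap.isCoatom_ker_of_surjective (K.mkQ_surjective.comp hf)

/-- Two length two uniserial modules with isomorphic socles are isomorphic. -/
lemma len_two_iso (hA : NakT A) (S : Type) [AddCommGroup S] [Module A S] [IsSimpleModule A S]
    (M M' : Type) [AddCommGroup M] [Module A M] [AddCommGroup M'] [Module A M']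
    [Module.Finite A M] [Module.Finite A M']
    (hM : Uni A M) (hM' : Uni A M') (hl : len A M = len A M')
    (i : S →ₗ[A] M) (hi : Injective i) (i' : S →ₗ[A] M') (hi' : Injective i') :
    Nonempty (M ≃ₗ[A] M') := by
  obtain ⟨E, _, _, f, hE, hf, hess⟩ := exists_env hA S
  have : Nontrivial S := IsSimpleModule.nontrivial A S
  have hne : LinearMap.range f ≠ ⊥ := by
    intro h
    obtain ⟨s, hs⟩ := exists_ne (0 : S)
    exact hs (hf (by rw [LinearMap.range_eq_bot.1 h]; simp))
  have hU : Uni A E := uni_of_ess hA hne hess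
  have : Module.Finite A E := hU.finite
  have emb : ∀ (X : Type) [AddCommGroup X] [Module A X] (hX : Uni A X)
      (j : S →ₗ[A] X) (hj : Injective j), ∃ g : X →ₗ[A] E, Injective g := by
    intro X _ _ hX j hj
    obtain ⟨g, hg⟩ := hE.out j hj f
    refine ⟨g, ?_⟩
    rw [← LinearMap.ker_eq_bot]
    obtain ⟨s, hs⟩ := exists_ne (0 : S)
    rcases hX (LinearMap.ker g) (LinearMap.range j) with h | h
    · rw [eq_bot_iff]
      intro x hx
      obtain ⟨t, rfl⟩ := h hx
      have : f t = 0 := by rw [← hg]; exact hx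
      have : t = 0 := hf (by rw [this, map_zero])
      simp [this]
    · exfalso
      apply hs
      apply hf
      rw [← hg, map_zero]
      exact h ⟨s, rfl⟩
  obtain ⟨g, hg⟩ := emb M hM i hi
  obtain ⟨g', hg'⟩ := emb M' hM' i' hi'
  have e := LinearEquiv.ofInjective g hg
  have e' := LinearEquiv.ofInjective g' hg'
  have : LinearMap.range g = LinearMap.range g' := hU.eq_of_len (by
    rw [← len_equiv e, ← len_equiv e', hl])
  exact ⟨e.trans ((LinearEquiv.ofEq _ _ this).trans e'.symm)⟩

theorem exists_dat (hA : NakT A) : Nonempty (Dat A) := by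
  classical
  obtain ⟨V, hV, S, hS, hcomp, huniq⟩ := fin_simples (A := A)
  have h1 := fun v => exists_cover hA (S v)
  choose P hproj hfg hnt huni π hπ using h1
  have hker : ∀ v, IsCoatom (LinearMap.ker (π v)) := fun v =>
    LinearMap.isCoatom_ker_of_surjective (hπ v)
  have cover : ∀ (M : Type) [AddCommGroup M] [Module A M] [Module.Finite A M] [Nontrivial M],
      Uni A M → ∃ v, ∃ f : P v →ₗ[A] M, Surjective f := by
    intro M _ _ _ _ hU
    obtain ⟨K, hK⟩ := exists_coatom (A := A) M
    have : IsSimpleModule A (M ⧸ K) := isSimpleModule_iff_isCoatom.2 hK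
    obtain ⟨v, ⟨e⟩⟩ := hcomp (M ⧸ K)
    obtain ⟨f, hf⟩ := Module.projective_lifting_property K.mkQ (e.symm.toLinearMap ∘ₗ π v)
      K.mkQ_surjective
    refine ⟨v, f, ?_⟩
    rw [← LinearMap.range_eq_top]
    refine hU.eq_top_of_not_le hK fun hle => ?_
    have hz : ∀ x, π v x = 0 := by
      intro x
      have h2 := LinearMap.congr_fun hf x
      have h3 : K.mkQ (f x) = 0 := (Submodule.Quotient.mk_eq_zero K).2 (hle ⟨x, rfl⟩)
      rw [LinearMap.comp_apply, h3] at h2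
      simpa using h2.symm
    have : Nontrivial (S v) := IsSimpleModule.nontrivial A _
    obtain ⟨s, hs⟩ := exists_ne (0 : S v)
    obtain ⟨x, rfl⟩ := hπ v s
    exact hs (hz x)
  have hfin : ∀ v (M : Type) [AddCommGroup M] [Module A M] (f : P v →ₗ[A] M),
      Surjective f → Module.Finite A M := fun v M _ _ f hf => Module.Finite.of_surjective f hf
  have unique : ∀ (v w : V) (M : Type) [AddCommGroup M] [Module A M] [Nontrivial M]
      (f : P v →ₗ[A] M) (g : P w →ₗ[A] M), Surjective f → Surjective g → v = w := by
    intro v w M _ _ _ f g hf hg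
    have := hfin v M f hf
    obtain ⟨K, hK⟩ := exists_coatom (A := A) M
    have key : ∀ (u : V) (h : P u →ₗ[A] M), Surjective h → Nonempty ((M ⧸ K) ≃ₗ[A] S u) := by
      intro u h hh
      have e1 : LinearMap.ker (K.mkQ ∘ₗ h) = LinearMap.ker (π u) := by
        refine (huni u).coatom_eq ?_ (hker u)
        rw [LinearMap.ker_comp, Submodule.ker_mkQ]
        exact comap_coatom h hh hK
      exact ⟨((LinearMap.quotKerEquivOfSurjective (K.mkQ ∘ₗ h)
        (K.mkQ_surjective.comp hh)).symm.trans (Submodule.quotEquivOfEq _ _ e1)).trans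
        (LinearMap.quotKerEquivOfSurjective _ (hπ u))⟩
    obtain ⟨e⟩ := key v f hf
    obtain ⟨e'⟩ := key w g hg
    exact huniq v w ⟨e.symm.trans e'⟩
  have hrad : ∀ v : {v : V // LinearMap.ker (π v) ≠ ⊥},
      ∃ w, ∃ f : P w →ₗ[A] LinearMap.ker (π v.1), Surjective f := by
    rintro ⟨v, hv⟩
    have : Nontrivial (LinearMap.ker (π v)) := Submodule.nontrivial_iff_ne_bot.2 hv
    exact cover _ ((huni v).of_injective _ (Submodule.subtype_injective _))
  choose t ft hft using hrad
  have hB : ∀ v : {v : V // LinearMap.ker (π v) ≠ ⊥}, ∃ B : ModuleCat.{0} A,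
      Module.Finite A B ∧ Nontrivial B ∧ Uni A B ∧ len A B = 2 ∧
      (∃ q : P v.1 →ₗ[A] B, Surjective q) ∧ ∃ i : S (t v) →ₗ[A] B, Injective i := by
    rintro ⟨v, hv⟩
    let f : P (t ⟨v, hv⟩) →ₗ[A] LinearMap.ker (π v) := ft ⟨v, hv⟩
    have hf : Surjective f := hft ⟨v, hv⟩
    have : Nontrivial (LinearMap.ker (π v)) := Submodule.nontrivial_iff_ne_bot.2 hv
    obtain ⟨K, hK⟩ := exists_coatom (A := A) (LinearMap.ker (π v))
    have hKs : IsSimpleModule A (LinearMap.ker (π v) ⧸ K) := isSimpleModule_iff_isCoatom.2 hK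
    obtain ⟨u, ⟨e⟩⟩ := hcomp (LinearMap.ker (π v) ⧸ K)
    have hu : u = t ⟨v, hv⟩ := by
      have : Nontrivial (S u) := IsSimpleModule.nontrivial A _
      exact unique u _ (S u) (π u) (e.toLinearMap ∘ₗ K.mkQ ∘ₗ f) (hπ u)
        (e.surjective.comp (K.mkQ_surjective.comp hf))
    let K' : Submodule A (P v) := K.map (LinearMap.ker (π v)).subtype
    let i0 : LinearMap.ker (π v) →ₗ[A] (P v ⧸ K') := K'.mkQ ∘ₗ (LinearMap.ker (π v)).subtype
    have hi0 : LinearMap.ker i0 = K := by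
      rw [LinearMap.ker_comp, Submodule.ker_mkQ]
      exact Submodule.comap_map_eq_of_injective (Submodule.subtype_injective _) K
    let i1 : (LinearMap.ker (π v) ⧸ K) →ₗ[A] (P v ⧸ K') := K.liftQ i0 hi0.ge
    have hi1 : Injective i1 := by
      rw [← LinearMap.ker_eq_bot]
      exact Submodule.ker_liftQ_eq_bot _ _ _ hi0.le
    have hlen : len A (P v ⧸ K') = 2 := by
      have a1 := len_ker (π v) (hπ v)
      have a2 := len_quot K
      have a3 := len_quot K'
      have a4 : len A K' = len A K :=
        (len_equiv (Submodule.equivMapOfInjective _ (Submodule.subtype_injective _) K)).symm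
      have a5 := len_simple (A := A) (LinearMap.ker (π v) ⧸ K)
      have a6 := len_simple (A := A) (S v)
      omega
    refine ⟨ModuleCat.of A (P v ⧸ K'), inferInstanceAs (Module.Finite A (P v ⧸ K')), ?_,
      (huni v).of_surjective K'.mkQ K'.mkQ_surjective, hlen, ⟨K'.mkQ, K'.mkQ_surjective⟩, ?_⟩
    · by_contra h
      rw [not_nontrivial_iff_subsingleton] at h
      have h0 := (len_eq_zero (A := A) (M := P v ⧸ K')).2 h
      omega
    · rw [← hu]
      exact ⟨i1 ∘ₗ e.symm.toLinearMap, hi1.comp e.symm.injective⟩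
  have htinj : Injective t := by
    intro v w hvw
    obtain ⟨B, b1, b2, b3, b4, ⟨q, hq⟩, i, hi⟩ := hB v
    obtain ⟨B', b1', b2', b3', b4', ⟨q', hq'⟩, hex⟩ := hB w
    rw [← hvw] at hex
    obtain ⟨i', hi'⟩ := hex
    obtain ⟨e⟩ := len_two_iso hA (S (t v)) B B' b3 b3' (b4.trans b4'.symm) i hi i' hi'
    exact Subtype.ext (unique v.1 w.1 B' (e.toLinearMap ∘ₗ q) q' (e.surjective.comp hq) hq')
  have : Fintype V := Fintype.ofFinite V
  let e : {v : V // LinearMap.ker (π v) ≠ ⊥} ≃ {w : V // w ∈ Set.range t} :=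
    Equiv.ofInjective t htinj
  refine ⟨⟨V, hV, P, hproj, hfg, hnt, huni, cover, unique, e.extendSubtype, ?_⟩⟩
  intro v K hK hKb
  have hKe : K = LinearMap.ker (π v) := (huni v).coatom_eq hK (hker v)
  subst hKe
  rw [Equiv.extendSubtype_apply_of_mem e v hKb]
  exact ⟨ft ⟨v, hKb⟩, hft ⟨v, hKb⟩⟩

end NakMod
namespace NakMod

open Function

section Rep

variable {A : Type} [Ring A]

attribute [instance] Dat.proj Dat.fg Dat.nt Dat.fin

/-- Length of the indecomposable projective at `v`. -/
def Dat.c (d : Dat A) (v : d.V) : ℕ := len A (d.P v)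

/-- `M` is the uniserial module with top at `v` and length `l`. -/
def IsU (d : Dat A) (M : Type) [AddCommGroup M] [Module A M] (v : d.V) (l : ℕ) : Prop :=
  (∃ f : d.P v →ₗ[A] M, Surjective f) ∧ len A M = l

lemma split_ind {P M : Type} [AddCommGroup P] [Module A P] [AddCommGroup M] [Module A M]
    (hP : Ind A P) (f : P →ₗ[A] M) (s : M →ₗ[A] P) (h : f ∘ₗ s = LinearMap.id) :
    Injective f ∨ Subsingleton M := by
  have hx : ∀ x, f (s x) = x := fun x => LinearMap.congr_fun h x
  have hc : IsCompl (LinearMap.ker f) (LinearMap.range s) := by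
    constructor
    · rw [Submodule.disjoint_def]
      rintro x hx1 ⟨y, rfl⟩
      have : f (s y) = 0 := hx1
      rw [hx] at this
      rw [this, map_zero]
    · rw [codisjoint_iff, eq_top_iff]
      intro x _
      rw [Submodule.mem_sup]
      refine ⟨x - s (f x), ?_, s (f x), ⟨_, rfl⟩, by simp⟩
      rw [LinearMap.mem_ker, map_sub, hx, sub_self]
  rcases hP _ _ hc with h1 | h1
  · exact Or.inl (LinearMap.ker_eq_bot.1 h1)
  · right
    refine ⟨fun x y => ?_⟩
    have h2 := LinearMap.range_eq_bot.1 h1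
    rw [← hx x, ← hx y, h2]
    simp

variable [IsArtinianRing A] {d : Dat A}
variable {M N : Type} [AddCommGroup M] [Module A M] [AddCommGroup N] [Module A N]
variable {v w : d.V} {l m : ℕ}

lemma IsU.finite (h : IsU d M v l) : Module.Finite A M := by
  obtain ⟨⟨f, hf⟩, -⟩ := h
  exact Module.Finite.of_surjective f hf

lemma IsU.uni (h : IsU d M v l) : Uni A M := by
  obtain ⟨⟨f, hf⟩, -⟩ := h
  exact (d.uni v).of_surjective f hf

lemma IsU.le (h : IsU d M v l) : l ≤ d.c v := by
  obtain ⟨⟨f, hf⟩, rfl⟩ := h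
  exact len_le_of_surj f hf

lemma isU_proj (d : Dat A) (v : d.V) : IsU d (d.P v) v (d.c v) :=
  ⟨⟨LinearMap.id, fun x => ⟨x, rfl⟩⟩, rfl⟩

lemma Dat.c_pos (d : Dat A) (v : d.V) : 0 < d.c v := by
  rw [Nat.pos_iff_ne_zero]
  intro h
  have := (len_eq_zero (A := A) (M := d.P v)).1 h
  exact not_subsingleton (d.P v) this

lemma IsU.of_equiv (h : IsU d M v l) (e : M ≃ₗ[A] N) : IsU d N v l := by
  obtain ⟨⟨f, hf⟩, rfl⟩ := h
  exact ⟨⟨e.toLinearMap ∘ₗ f, e.surjective.comp hf⟩, (len_equiv e).symm⟩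

lemma IsU.equiv (h : IsU d M v l) (h' : IsU d N v l) : Nonempty (M ≃ₗ[A] N) := by
  obtain ⟨⟨f, hf⟩, hl⟩ := h
  obtain ⟨⟨g, hg⟩, hl'⟩ := h'
  have h1 := len_ker f hf
  have h2 := len_ker g hg
  have : LinearMap.ker f = LinearMap.ker g := (d.uni v).eq_of_len (by omega)
  exact ⟨((LinearMap.quotKerEquivOfSurjective f hf).symm.trans
    (Submodule.quotEquivOfEq _ _ this)).trans (LinearMap.quotKerEquivOfSurjective g hg)⟩

lemma IsU.nontrivial (h : IsU d M v l) (hl : 0 < l) : Nontrivial M := by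
  have := h.finite
  by_contra hn
  rw [not_nontrivial_iff_subsingleton] at hn
  have h0 := (len_eq_zero (A := A) (M := M)).2 hn
  have := h.2
  omega

lemma IsU.vertex (h : IsU d M v l) (h' : IsU d M w m) (hl : 0 < l) : v = w := by
  have := h.nontrivial hl
  obtain ⟨⟨f, hf⟩, -⟩ := h
  obtain ⟨⟨g, hg⟩, -⟩ := h'
  exact d.unique v w M f g hf hg

lemma IsU.rad (h : IsU d M v (l + 1)) : ∃ K : Submodule A M, IsU d K (d.τ v) l := by
  have := h.nontrivial (by omega)
  have := h.finite
  obtain ⟨⟨f, hf⟩, hl⟩ := h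
  obtain ⟨K, hK⟩ := exists_coatom (A := A) M
  have : IsSimpleModule A (M ⧸ K) := isSimpleModule_iff_isCoatom.2 hK
  have h1 := len_quot K
  rw [len_simple (A := A) (M ⧸ K)] at h1
  refine ⟨K, ?_, by omega⟩
  by_cases hKb : K.comap f = ⊥
  · have : K = ⊥ := by rw [← Submodule.map_comap_eq_of_surjective hf K, hKb, Submodule.map_bot]
    subst this
    exact ⟨0, fun x => ⟨0, Subsingleton.elim _ _⟩⟩
  · obtain ⟨g, hg⟩ := d.τ_spec v _ (comap_coatom f hf hK) hKb
    let f' : K.comap f →ₗ[A] K := f.restrict (p := K.comap f) (q := K) (fun x hx => hx)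
    suffices hs : Surjective f' from ⟨f' ∘ₗ g, hs.comp hg⟩
    rintro ⟨y, hy⟩
    obtain ⟨x, rfl⟩ := hf y
    exact ⟨⟨x, hy⟩, rfl⟩

lemma IsU.sub_exists (m : ℕ) : ∀ (l : ℕ), IsU d M v (l + m) →
    ∃ K : Submodule A M, IsU d K ((d.τ ^ m) v) l := by
  induction m with
  | zero =>
    intro l h
    exact ⟨⊤, h.of_equiv Submodule.topEquiv.symm⟩
  | succ m ih =>
    intro l h
    obtain ⟨K, hK⟩ := ih (l + 1) (by rw [show l + 1 + m = l + (m + 1) by ring]; exact h)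
    obtain ⟨K', hK'⟩ := hK.rad
    refine ⟨K'.map K.subtype, ?_⟩
    rw [pow_succ', Equiv.Perm.mul_apply]
    exact hK'.of_equiv (Submodule.equivMapOfInjective _ (Submodule.subtype_injective _) K')

lemma IsU.sub (h : IsU d M v l) (K : Submodule A M) (hK : len A K + m = l) :
    IsU d K ((d.τ ^ m) v) (len A K) := by
  subst hK
  obtain ⟨K', hK'⟩ := IsU.sub_exists m (len A K) h
  have := h.finite
  have : K' = K := h.uni.eq_of_len hK'.2
  subst this
  exact hK'

lemma IsU.ker (h : IsU d M v l) (f : d.P v →ₗ[A] M) (hf : Surjective f) :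
    IsU d (LinearMap.ker f) ((d.τ ^ l) v) (d.c v - l) := by
  have h1 := len_ker f hf
  have h2 := h.2
  have h3 := (isU_proj d v).sub (m := l) (LinearMap.ker f) (by unfold Dat.c; omega)
  have h4 : d.c v - l = len A (LinearMap.ker f) := by unfold Dat.c; omega
  rw [h4]
  exact h3

lemma exists_isU (d : Dat A) (v : d.V) (l : ℕ) (hl : l ≤ d.c v) :
    ∃ K : Submodule A (d.P v), IsU d (d.P v ⧸ K) v l := by
  obtain ⟨m, hm⟩ := Nat.exists_eq_add_of_le hl
  obtain ⟨K, hK⟩ := IsU.sub_exists (d := d) (v := v) (M := d.P v) l m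
    (by rw [Nat.add_comm, ← hm]; exact isU_proj d v)
  refine ⟨K, ⟨K.mkQ, K.mkQ_surjective⟩, ?_⟩
  have h1 := len_quot K
  have h2 := hK.2
  unfold Dat.c at hm
  omega

lemma Dat.c_le (d : Dat A) (v : d.V) : d.c v ≤ d.c (d.τ v) + 1 := by
  obtain ⟨k, hk⟩ := Nat.exists_eq_succ_of_ne_zero (d.c_pos v).ne'
  have h := isU_proj d v
  rw [hk] at h
  obtain ⟨K, hK⟩ := IsU.rad h
  have := hK.le
  omega

lemma IsU.projective_iff (h : IsU d M v l) :
    Module.Projective A M ↔ (l = 0 ∨ l = d.c v) := by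
  have := h.finite
  obtain ⟨⟨f, hf⟩, hl⟩ := h
  have h1 := len_ker f hf
  constructor
  · intro hp
    obtain ⟨s, hs⟩ := Module.projective_lifting_property f LinearMap.id hf
    rcases split_ind (d.uni v).ind f s hs with h2 | h2
    · right
      rw [← hl]
      exact (len_equiv (LinearEquiv.ofBijective f ⟨h2, hf⟩)).symm
    · left
      rw [← hl]
      exact len_eq_zero.2 h2
  · rintro (h2 | h2)
    · have : Subsingleton M := len_eq_zero.1 (hl.trans h2)
      infer_instance
    · have h3 : len A (LinearMap.ker f) = 0 := by unfold Dat.c at h2; omega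
      have : Subsingleton (LinearMap.ker f) := len_eq_zero.1 h3
      have h4 : LinearMap.ker f = ⊥ := Submodule.subsingleton_iff_eq_bot.1 this
      exact Module.Projective.of_equiv
        (LinearEquiv.ofBijective f ⟨LinearMap.ker_eq_bot.1 h4, hf⟩)

lemma exists_IsU_of_uni (d : Dat A) [Module.Finite A M] [Nontrivial M] (h : Uni A M) :
    ∃ v, IsU d M v (len A M) := by
  obtain ⟨v, f, hf⟩ := d.cover M h
  exact ⟨v, ⟨f, hf⟩, rfl⟩

/-- The function `i ↦ i + c (τ^i v)`. -/
def Dat.p (d : Dat A) (v : d.V) (i : ℤ) : ℤ := i + d.c ((d.τ ^ i) v)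

lemma Dat.p_mono (d : Dat A) (v : d.V) : Monotone (d.p v) := by
  apply monotone_int_of_le_succ
  intro i
  have h := d.c_le ((d.τ ^ i) v)
  have h2 : (d.τ ^ (i + 1)) v = d.τ ((d.τ ^ i) v) := by
    rw [add_comm, zpow_add, zpow_one, Equiv.Perm.mul_apply]
  unfold Dat.p
  rw [h2]
  omega

lemma Dat.p_per (d : Dat A) (v : d.V) (i : ℤ) :
    d.p v (i + orderOf d.τ) = d.p v i + orderOf d.τ := by
  unfold Dat.p
  rw [zpow_add, zpow_natCast, pow_orderOf_eq_one, mul_one]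
  ring

lemma Dat.N_pos (d : Dat A) : 0 < orderOf d.τ := orderOf_pos _

open CategoryTheory in
lemma pd_ker {P : Type} [AddCommGroup P] [Module A P] [Module.Projective A P]
    (f : P →ₗ[A] M) (hf : Surjective f) (n : ℕ) :
    HasProjectiveDimensionLE (ModuleCat.of A M) (n + 1) ↔
      HasProjectiveDimensionLE (ModuleCat.of A (LinearMap.ker f)) n := by
  let S : ShortComplex (ModuleCat.{0} A) :=
    ShortComplex.mk (ModuleCat.ofHom (LinearMap.ker f).subtype) (ModuleCat.ofHom f)
      (by ext x; exact x.2)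
  have hS : S.ShortExact :=
    { exact := (ShortComplex.ShortExact.moduleCat_exact_iff_function_exact S).2
        (LinearMap.exact_subtype_ker_map f)
      mono_f := (ModuleCat.mono_iff_injective _).2 (Submodule.subtype_injective _)
      epi_g := (ModuleCat.epi_iff_surjective _).2 hf }
  exact hS.hasProjectiveDimensionLT_X₃_iff n
    (inferInstanceAs (Projective (ModuleCat.of A P)))

open CategoryTheory in
lemma pd_iff (v : d.V) (n : ℕ) : ∀ (M : Type) [AddCommGroup M] [Module A M] (a b : ℤ) (l : ℕ),
    IsU d M ((d.τ ^ a) v) l → (l : ℤ) = b - a →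
    (HasProjectiveDimensionLE (ModuleCat.of A M) n ↔ NakComb.D (d.p v) n a b) := by
  induction n with
  | zero =>
    intro M _ _ a b l h hl
    rw [← projective_iff_hasProjectiveDimensionLE_zero, ← IsProjective.iff_projective,
      h.projective_iff]
    unfold NakComb.D Dat.p
    omega
  | succ n ih =>
    intro M _ _ a b l h hl
    obtain ⟨f, hf⟩ := h.1
    rw [pd_ker f hf n]
    have h1 := h.ker f hf
    have h2 := h.le
    rw [← Equiv.Perm.mul_apply, ← zpow_natCast, ← zpow_add,
      show (l : ℤ) + a = b by omega] at h1
    exact ih _ b (d.p v a) _ h1 (by unfold Dat.p; omega)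

end Rep

end NakMod
namespace NakMod

open Function

section PD

variable {A : Type} [Ring A]

open CategoryTheory CategoryTheory.Limits

lemma pd_kernel {P M : ModuleCat.{0} A} (f : P ⟶ M) (hP : CategoryTheory.Projective P)
    (hf : Epi f) (n : ℕ) :
    HasProjectiveDimensionLE M (n + 1) ↔ HasProjectiveDimensionLE (kernel f) n := by
  let S : ShortComplex (ModuleCat.{0} A) := ShortComplex.mk (kernel.ι f) f (by simp)
  have hS : S.ShortExact :=
    { exact := ShortComplex.exact_kernel f
      mono_f := inferInstanceAs (Mono (kernel.ι f))
      epi_g := hf }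
  exact hS.hasProjectiveDimensionLT_X₃_iff n hP

lemma projDimLE_iff (n : ℕ) : ∀ M : ModuleCat.{0} A,
    ArtinAlg.ProjDimLE A n M ↔ HasProjectiveDimensionLE M n := by
  induction n with
  | zero =>
    intro M
    rw [← projective_iff_hasProjectiveDimensionLE_zero]
    constructor
    · intro h
      cases h with
      | zero _ h => exact h
    · exact fun h => .zero M h
  | succ n ih =>
    intro M
    constructor
    · intro h
      cases h with
      | succ _ _ P f hP hf h => exact (pd_kernel f hP hf n).2 ((ih _).1 h)
    · intro h
      refine .succ n M _ (CategoryTheory.Projective.π M) inferInstance inferInstance ?_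
      exact (ih _).2 ((pd_kernel _ inferInstance inferInstance n).1 h)

lemma projDim_le_iff (M : ModuleCat.{0} A) (n : ℕ) :
    ArtinAlg.projDim A M ≤ n ↔ HasProjectiveDimensionLE M n := by
  constructor
  · intro h
    have hne : {d : ℕ∞ | ∃ n : ℕ, d = n ∧ ArtinAlg.ProjDimLE A n M}.Nonempty := by
      by_contra hn
      rw [Set.not_nonempty_iff_eq_empty] at hn
      rw [ArtinAlg.projDim, hn, sInf_empty] at h
      exact absurd h (by simp)
    obtain ⟨m, hm, hM⟩ := csInf_mem hne
    rw [ArtinAlg.projDim, hm] at h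
    have hmn : m ≤ n := by exact_mod_cast h
    have := (projDimLE_iff m M).1 hM
    exact hasProjectiveDimensionLT_of_ge M (m + 1) (n + 1) (by omega)
  · intro h
    exact sInf_le ⟨n, rfl, (projDimLE_iff n M).2 h⟩

lemma pd_linearEquiv {M N : Type} [AddCommGroup M] [Module A M] [AddCommGroup N] [Module A N]
    (i : N →ₗ[A] M) (r : M →ₗ[A] N) (h : r ∘ₗ i = LinearMap.id) (n : ℕ)
    (hM : HasProjectiveDimensionLE (ModuleCat.of A M) n) :
    HasProjectiveDimensionLE (ModuleCat.of A N) n := by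
  let ρ : Retract (ModuleCat.of A N) (ModuleCat.of A M) :=
    { i := ModuleCat.ofHom i
      r := ModuleCat.ofHom r
      retract := by rw [← ModuleCat.ofHom_comp, h]; rfl }
  exact ρ.hasProjectiveDimensionLT (n + 1)

lemma pd_compl {M : Type} [AddCommGroup M] [Module A M] (N₁ N₂ : Submodule A M)
    (hc : IsCompl N₁ N₂) (n : ℕ)
    (h1 : HasProjectiveDimensionLE (ModuleCat.of A N₁) n)
    (h2 : HasProjectiveDimensionLE (ModuleCat.of A N₂) n) :
    HasProjectiveDimensionLE (ModuleCat.of A M) n := by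
  let S : ShortComplex (ModuleCat.{0} A) :=
    ShortComplex.mk (ModuleCat.ofHom N₁.subtype)
      (ModuleCat.ofHom (N₂.projectionOnto N₁ hc.symm))
      (by ext x; exact congrArg Subtype.val (Submodule.projectionOnto_apply_right hc.symm x))
  have hS : S.ShortExact :=
    { exact := (ShortComplex.ShortExact.moduleCat_exact_iff_function_exact S).2 (by
        change Function.Exact N₁.subtype (N₂.projectionOnto N₁ hc.symm)
        rw [LinearMap.exact_iff, Submodule.ker_projectionOnto, Submodule.range_subtype])
      mono_f := (ModuleCat.mono_iff_injective _).2 (Submodule.subtype_injective _)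
      epi_g := (ModuleCat.epi_iff_surjective _).2 (Submodule.projectionOnto_surjective _) }
  exact hS.hasProjectiveDimensionLT_X₂ (n + 1) h1 h2

variable [IsArtinianRing A]

lemma reduce (hA : NakT A) (n k : ℕ) : ∀ (M : Type) [AddCommGroup M] [Module A M]
    [Module.Finite A M], len A M = k →
    HasProjectiveDimensionLE (ModuleCat.of A M) (n + 1) →
    ¬ HasProjectiveDimensionLE (ModuleCat.of A M) n →
    ∃ M' : ModuleCat.{0} A, Module.Finite A M' ∧ Nontrivial M' ∧ Uni A M' ∧
      HasProjectiveDimensionLE M' (n + 1) ∧ ¬ HasProjectiveDimensionLE M' n := by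
  induction k using Nat.strong_induction_on with
  | _ k ih =>
  intro M _ _ _ hk h1 h0
  have hnt : Nontrivial M := by
    by_contra h
    rw [not_nontrivial_iff_subsingleton] at h
    have : Module.Projective A M := inferInstance
    have : CategoryTheory.Projective (ModuleCat.of A M) := inferInstance
    have := (projective_iff_hasProjectiveDimensionLE_zero _).1 this
    exact h0 (hasProjectiveDimensionLT_of_ge _ (0 + 1) (n + 1) (by omega))
  by_cases hind : Ind A M
  · exact ⟨ModuleCat.of A M, ‹_›, ‹_›, hA M hind, h1, h0⟩
  · unfold Ind at hind
    push Not at hind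
    obtain ⟨N₁, N₂, hc, hb1, hb2⟩ := hind
    have key : ∀ N N' : Submodule A M, IsCompl N N' → N' ≠ ⊥ →
        ¬ HasProjectiveDimensionLE (ModuleCat.of A N) n →
        ∃ M' : ModuleCat.{0} A, Module.Finite A M' ∧ Nontrivial M' ∧ Uni A M' ∧
        HasProjectiveDimensionLE M' (n + 1) ∧ ¬ HasProjectiveDimensionLE M' n := by
      intro N N' hc hN' hne
      refine ih (len A N) ?_ N rfl ?_ hne
      · rw [← hk]
        apply len_lt
        rintro rfl
        exact hN' (by simpa using hc.inf_eq_bot)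
      · exact pd_linearEquiv N.subtype (N.projectionOnto N' hc)
          (Submodule.projectionOnto_comp_subtype hc) _ h1
    by_cases h3 : HasProjectiveDimensionLE (ModuleCat.of A N₁) n
    · by_cases h4 : HasProjectiveDimensionLE (ModuleCat.of A N₂) n
      · exact absurd (pd_compl N₁ N₂ hc n h3 h4) h0
      · exact key N₂ N₁ hc.symm hb1 h4
    · exact key N₁ N₂ hc hb2 h3

end PD

section Env

variable {A : Type} [Ring A] [IsArtinianRing A]

lemma simple_isU (d : Dat A) (S : Type) [AddCommGroup S] [Module A S] [IsSimpleModule A S] :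
    ∃ v, IsU d S v 1 := by
  have : Nontrivial S := IsSimpleModule.nontrivial A S
  have hU : Uni A S := by
    intro N₁ N₂
    rcases eq_bot_or_eq_top N₁ with h | h
    · exact Or.inl (h ▸ bot_le)
    · exact Or.inr (h ▸ le_top)
  have : Module.Finite A S := hU.finite
  obtain ⟨v, hv⟩ := exists_IsU_of_uni d hU
  rw [len_simple] at hv
  exact ⟨v, hv⟩

lemma env_coords (hA : NakT A) (d : Dat A) {S I : Type} [AddCommGroup S] [Module A S]
    [IsSimpleModule A S] [AddCommGroup I] [Module A I] (hI : Module.Injective A I)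
    (f : S →ₗ[A] I) (hf : Function.Injective f)
    (hess : ∀ K : Submodule A I, K ≠ ⊥ → LinearMap.range f ≤ K)
    (v : d.V) (j : ℤ) (hS : IsU d S ((d.τ ^ (j - 1)) v) 1) :
    ∃ c : ℤ, c < j ∧ j ≤ d.p v c ∧ d.p v (c - 1) < j ∧
      ∃ l : ℕ, IsU d I ((d.τ ^ c) v) l ∧ (l : ℤ) = j - c := by
  have : Nontrivial S := IsSimpleModule.nontrivial A S
  have hntI : Nontrivial I := hf.nontrivial
  have hne : LinearMap.range f ≠ ⊥ := by
    intro h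
    obtain ⟨s, hs⟩ := exists_ne (0 : S)
    exact hs (hf (by rw [LinearMap.range_eq_bot.1 h]; simp))
  have hU : Uni A I := uni_of_ess hA hne hess
  have hfin : Module.Finite A I := hU.finite
  obtain ⟨u, hu⟩ := exists_IsU_of_uni d hU
  generalize hl : len A I = l at hu
  have hr : IsU d (LinearMap.range f) ((d.τ ^ (j - 1)) v) 1 :=
    hS.of_equiv (LinearEquiv.ofInjective f hf)
  have hl1 : 1 ≤ l := by
    have := len_quot (LinearMap.range f)
    rw [hr.2] at this
    omega
  have hr2 := hu.sub (m := l - 1) (LinearMap.range f) (by rw [hr.2]; omega)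
  have hvu := hr.vertex hr2 one_pos
  have hu2 : u = (d.τ ^ (j - l)) v := by
    have h3 : (j - 1 : ℤ) = ((l - 1 : ℕ) : ℤ) + (j - l) := by omega
    rw [h3, zpow_add, zpow_natCast, Equiv.Perm.mul_apply] at hvu
    exact ((d.τ ^ (l - 1)).injective hvu).symm
  subst hu2
  refine ⟨j - l, by omega, ?_, ?_, l, hu, by omega⟩
  · have := hu.le
    unfold Dat.p
    omega
  · by_contra hcon
    rw [not_lt] at hcon
    unfold Dat.p at hcon
    obtain ⟨K, hK⟩ := exists_isU d ((d.τ ^ (j - l - 1)) v) (l + 1) (by omega)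
    obtain ⟨K', hK'⟩ := hK.rad
    have h4 : d.τ ((d.τ ^ (j - l - 1)) v) = (d.τ ^ (j - l)) v := by
      rw [← Equiv.Perm.mul_apply, ← zpow_one_add]
      congr 2
      ring
    rw [h4] at hK'
    obtain ⟨e⟩ := hu.equiv hK'
    obtain ⟨r, hr⟩ := hI.out (K'.subtype ∘ₗ e.toLinearMap)
      ((Submodule.subtype_injective _).comp e.injective) LinearMap.id
    rcases split_ind hK.uni.ind r (K'.subtype ∘ₗ e.toLinearMap)
      (by ext x; exact hr x) with h5 | h5
    · have h6 : Function.Surjective r := fun x => ⟨_, hr x⟩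
      have h7 := len_equiv (LinearEquiv.ofBijective r ⟨h5, h6⟩)
      rw [hK.2, hl] at h7
      omega
    · exact not_subsingleton I h5

open CategoryTheory

lemma env_ess {S I : ModuleCat.{0} A} [IsSimpleModule A S] (f : S ⟶ I)
    (h : ArtinAlg.IsInjectiveEnvelopeHom A f) (K : Submodule A I) (hK : K ≠ ⊥) :
    LinearMap.range f.hom ≤ K := by
  by_contra hcon
  apply hK
  have hm : Mono (f ≫ ModuleCat.ofHom K.mkQ) := by
    rw [ModuleCat.mono_iff_injective]
    have h0 : K.mkQ ∘ₗ f.hom ≠ 0 := by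
      intro h0
      apply hcon
      rintro _ ⟨x, rfl⟩
      exact (Submodule.Quotient.mk_eq_zero K).1 (LinearMap.congr_fun h0 x)
    exact LinearMap.injective_of_ne_zero h0
  have h2 := (ModuleCat.mono_iff_injective _).1 (h.2.2 _ _ hm)
  have h3 : LinearMap.ker K.mkQ = ⊥ := LinearMap.ker_eq_bot.2 h2
  rwa [Submodule.ker_mkQ] at h3

lemma env_of_ess {S I : Type} [AddCommGroup S] [Module A S] [IsSimpleModule A S]
    [AddCommGroup I] [Module A I] (hI : Module.Injective A I)
    (f : S →ₗ[A] I) (hf : Function.Injective f)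
    (hess : ∀ K : Submodule A I, K ≠ ⊥ → LinearMap.range f ≤ K) :
    ArtinAlg.IsInjEnvOf A (ModuleCat.of A S) (ModuleCat.of A I) := by
  refine ⟨ModuleCat.ofHom f, Module.injective_object_of_injective_module A I,
    (ModuleCat.mono_iff_injective _).2 hf, fun N g hg => ?_⟩
  rw [ModuleCat.mono_iff_injective]
  have hg' := (ModuleCat.mono_iff_injective _).1 hg
  by_contra hcon
  have hk : LinearMap.ker g.hom ≠ ⊥ := fun h => hcon (LinearMap.ker_eq_bot.1 h)
  have : Nontrivial S := IsSimpleModule.nontrivial A S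
  obtain ⟨s, hs⟩ := exists_ne (0 : S)
  apply hs
  apply hg'
  have h1 : g.hom (f s) = 0 := hess _ hk ⟨s, rfl⟩
  rw [map_zero]
  exact h1

end Env

end NakMod

open ArtinAlg in
/-- Let `A` be a Nakayama algebra. Then `fin-pro A` is the maximum over
the simple modules `S` of `e(S) = min {pd S, pd (I S)}`. -/
theorem statement_12 (R : Type) [CommRing R] [IsArtinianRing R]
    (A : Type) [Ring A] [Algebra R A] [Module.Finite R A]
    (hNak : IsNakayama A) :
    finProDim A = sSup {x : ℕ∞ | ∃ S I : ModuleCat.{0} A, IsSimpleModule A ↥S ∧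
      IsInjEnvOf A S I ∧ x = min (projDim A S) (projDim A I)} := by
  have hArt : IsArtinianRing A := IsArtinianRing.of_finite R A
  have hA : NakMod.NakT A := fun M _ _ h1 h2 h3 => hNak (ModuleCat.of A M) h1 ⟨h2, h3⟩
  obtain ⟨d⟩ := NakMod.exists_dat hA
  apply le_antisymm
  · refine sSup_le ?_
    rintro x ⟨M, hM, rfl, hx⟩
    obtain ⟨m, hm⟩ := ENat.ne_top_iff_exists.1 hx
    rw [← hm]
    rcases m with _ | n
    · simp
    have h1 : HasProjectiveDimensionLE M (n + 1) := (NakMod.projDim_le_iff M (n + 1)).1 hm.ge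
    have h0 : ¬ HasProjectiveDimensionLE M n := by
      intro h
      have := (NakMod.projDim_le_iff M n).2 h
      rw [← hm] at this
      have : n + 1 ≤ n := by exact_mod_cast this
      omega
    obtain ⟨M', f1, f2, f3, f4, f5⟩ := NakMod.reduce hA n _ M rfl h1 h0
    obtain ⟨v, hv⟩ := NakMod.exists_IsU_of_uni d f3
    generalize NakMod.len A M' = l at hv
    have hv0 : NakMod.IsU d M' ((d.τ ^ (0 : ℤ)) v) l := by simpa using hv
    have hiff := fun n => NakMod.pd_iff v n M' 0 l l hv0 (by omega)
    have hle : (l : ℤ) ≤ d.p v 0 := by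
      have := hv0.le
      unfold NakMod.Dat.p
      omega
    obtain ⟨j, hj⟩ := NakComb.upper d.N_pos (d.p_mono v) (d.p_per v) n
      ((hiff (n + 1)).1 f4) (fun h => f5 ((hiff n).2 h)) hle
    have hpos := d.c_pos ((d.τ ^ (j - 1)) v)
    obtain ⟨K, hK⟩ := NakMod.exists_isU d ((d.τ ^ (j - 1)) v) 1 hpos
    have : IsSimpleModule A (d.P ((d.τ ^ (j - 1)) v) ⧸ K) := NakMod.len_eq_one.1 hK.2
    obtain ⟨E, _, _, f, hE, hf, hess⟩ := NakMod.exists_env hA (d.P ((d.τ ^ (j - 1)) v) ⧸ K)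
    obtain ⟨c, hc1, hc2, -, l', hl', hlc⟩ := NakMod.env_coords hA d hE f hf hess v j hK
    refine le_trans ?_ (le_sSup ⟨ModuleCat.of A (d.P ((d.τ ^ (j - 1)) v) ⧸ K),
      ModuleCat.of A E, this, NakMod.env_of_ess hE f hf hess, rfl⟩)
    have key : ∀ X : ModuleCat.{0} A, ¬ HasProjectiveDimensionLE X n →
        ((n + 1 : ℕ) : ℕ∞) ≤ projDim A X := by
      intro X hX
      rw [← NakMod.projDim_le_iff, not_le] at hX
      rw [Nat.cast_add, Nat.cast_one]
      exact Order.add_one_le_of_lt hX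
    refine le_min (key _ ?_) (key _ ?_)
    · rw [NakMod.pd_iff v n _ (j - 1) j 1 hK (by omega)]
      exact hj _ (by omega) (by unfold NakMod.Dat.p; omega)
    · rw [NakMod.pd_iff v n _ c j l' hl' hlc]
      exact hj _ hc1 hc2
  · refine sSup_le ?_
    rintro x ⟨S, I, hS, ⟨f, hf⟩, rfl⟩
    obtain ⟨v, hv⟩ := NakMod.simple_isU d S
    have hv0 : NakMod.IsU d S ((d.τ ^ ((1 : ℤ) - 1)) v) 1 := by simpa using hv
    obtain ⟨c, hc1, hc2, hc3, l, hl, hlc⟩ := NakMod.env_coords hA d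
      (have := hf.1; Module.injective_module_of_injective_object A I) f.hom
      ((ModuleCat.mono_iff_injective f).1 hf.2.1) (NakMod.env_ess f hf) v 1 hv0
    have fin : ∀ X : ModuleCat.{0} A, ∀ n : ℕ, HasProjectiveDimensionLE X n →
        Module.Finite A X → projDim A X ≤ finProDim A := by
      intro X n hX hfX
      refine le_sSup ⟨X, hfX, rfl, ?_⟩
      have := (NakMod.projDim_le_iff X n).2 hX
      exact ne_top_of_le_ne_top (ENat.coe_ne_top n) this
    obtain ⟨n, hn | hn⟩ := NakComb.finite d.N_pos (d.p_mono v) (d.p_per v) 1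
    · exact (min_le_left _ _).trans
        (fin S n ((NakMod.pd_iff v n S (1 - 1) 1 1 hv0 (by omega)).2 hn) hv0.finite)
    · exact (min_le_right _ _).trans
        (fin I n ((NakMod.pd_iff v n I c 1 l hl hlc).2 (hn c hc1 hc2 hc3)) hl.finite)
end
end

section
/- Let A be a connected Nakayama algebra. If there exists a simple module S such that pd S is finite and even, or such that pd IS is finite and odd, then A has finite global dimension. -/
open CategoryTheory CategoryTheory.Limits

noncomputable section

namespace NakPf

/-- uniserial -/
def Uni (A : Type) [Ring A] (M : Type) [AddCommGroup M] [Module A M] : Prop :=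
  ∀ N₁ N₂ : Submodule A M, N₁ ≤ N₂ ∨ N₂ ≤ N₁

section basic
variable {A : Type} [Ring A]
variable {M N S T : Type} [AddCommGroup M] [Module A M] [AddCommGroup N] [Module A N]
  [AddCommGroup S] [Module A S] [AddCommGroup T] [Module A T]

theorem Uni.of_inj (h : Uni A M) (f : N →ₗ[A] M) (hf : Function.Injective f) : Uni A N := by
  intro N₁ N₂
  rcases h (N₁.map f) (N₂.map f) with h | h
  · left; exact (Submodule.map_le_map_iff_of_injective hf _ _).1 h
  · right; exact (Submodule.map_le_map_iff_of_injective hf _ _).1 h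

theorem Uni.of_surj (h : Uni A M) (f : M →ₗ[A] N) (hf : Function.Surjective f) : Uni A N := by
  intro N₁ N₂
  rcases h (N₁.comap f) (N₂.comap f) with h | h
  · left; exact (Submodule.comap_le_comap_iff_of_surjective hf).1 h
  · right; exact (Submodule.comap_le_comap_iff_of_surjective hf).1 h

theorem coatom_ker [IsSimpleModule A S] (f : M →ₗ[A] S) (hf : Function.Surjective f) :
    IsCoatom (LinearMap.ker f) := by
  rw [← isSimpleModule_iff_isCoatom]
  exact IsSimpleModule.congr (f.quotKerEquivOfSurjective hf)

theorem surj_of_ne_zero [IsSimpleModule A S] (f : M →ₗ[A] S) (hf : f ≠ 0) :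
    Function.Surjective f := by
  exact LinearMap.surjective_of_ne_zero hf

/-- superfluous -/
theorem Uni.surj (h : Uni A M) [IsSimpleModule A S] (f : M →ₗ[A] S) 
    (g : N →ₗ[A] M) (hfg : f ∘ₗ g ≠ 0) : Function.Surjective g := by
  have hs := surj_of_ne_zero _ hfg
  have hf : Function.Surjective f := fun s => by
    obtain ⟨n, hn⟩ := hs s; exact ⟨g n, hn⟩
  have hc := coatom_ker f hf
  rw [← LinearMap.range_eq_top]
  by_contra hne
  rcases h (LinearMap.range g) (LinearMap.ker f) with h | h
  · exact hfg (LinearMap.ext fun n => h ⟨n, rfl⟩)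
  · rcases hc.le_iff.1 h with h | h
    · exact hne h
    · exact hfg (LinearMap.ext fun n => h.le ⟨n, rfl⟩)

theorem Uni.le_ker (h : Uni A M) [IsSimpleModule A S] (f : M →ₗ[A] S) (hf : Function.Surjective f)
    (K : Submodule A M) (hK : K ≠ ⊤) : K ≤ LinearMap.ker f := by
  rcases h K (LinearMap.ker f) with h | h
  · exact h
  · rcases (coatom_ker f hf).le_iff.1 h with h | h
    · exact absurd h hK
    · exact h.le

theorem Uni.top_unique (h : Uni A M) [IsSimpleModule A S] [IsSimpleModule A T]
    (f : M →ₗ[A] S) (hf : Function.Surjective f)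
    (g : M →ₗ[A] T) (hg : Function.Surjective g) : Nonempty (S ≃ₗ[A] T) := by
  have h1 := h.le_ker f hf _ (coatom_ker g hg).1
  have h2 := h.le_ker g hg _ (coatom_ker f hf).1
  have h3 := le_antisymm h2 h1
  exact ⟨(f.quotKerEquivOfSurjective hf).symm ≪≫ₗ Submodule.quotEquivOfEq _ _ h3 ≪≫ₗ
    g.quotKerEquivOfSurjective hg⟩

theorem exists_top [Module.Finite A M] [Nontrivial M] :
    ∃ (S : ModuleCat.{0} A) (_ : IsSimpleModule A S) (f : M →ₗ[A] S), Function.Surjective f := by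
  obtain ⟨K, hK⟩ := IsCoatomic.exists_coatom (Submodule A M)
  have := isSimpleModule_iff_isCoatom.2 hK
  exact ⟨ModuleCat.of A (M ⧸ K), this, K.mkQ, K.mkQ_surjective⟩

/-- Nakayama, decomposed form -/
theorem nak (hN : ArtinAlg.IsNakayama A) [Module.Finite A M]
    (h : ∀ N₁ N₂ : Submodule A M, IsCompl N₁ N₂ → N₁ = ⊥ ∨ N₂ = ⊥) : Uni A M := by
  cases subsingleton_or_nontrivial M
  · intro N₁ N₂; left; exact (Subsingleton.elim N₁ N₂).le
  · exact hN (ModuleCat.of A M) ‹_› ⟨‹_›, h⟩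

end basic

section len
variable {A : Type} [Ring A] [IsArtinianRing A]
variable {M N S T : Type} [AddCommGroup M] [Module A M] [AddCommGroup N] [Module A N]
  [AddCommGroup S] [Module A S] [AddCommGroup T] [Module A T]

/-- natural number length -/
def len (A : Type) [Ring A] (M : Type) [AddCommGroup M] [Module A M] : ℕ :=
  (Module.length A M).toNat

theorem coe_len [Module.Finite A M] : (len A M : ℕ∞) = Module.length A M := by
  have : IsNoetherian A M := inferInstance
  have : IsArtinian A M := inferInstance
  exact ENat.natCast_toNat Module.length_ne_top

theorem len_exact [Module.Finite A N] (K : Submodule A N) :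
    len A N = len A K + len A (N ⧸ K) := by
  have := Module.length_eq_add_of_exact K.subtype K.mkQ K.subtype_injective K.mkQ_surjective
    (LinearMap.exact_subtype_mkQ K)
  rw [← coe_len, ← coe_len, ← coe_len] at this
  exact_mod_cast this

theorem len_congr (e : M ≃ₗ[A] N) : len A M = len A N := by
  rw [len, len, e.length_eq]

theorem len_ker [Module.Finite A M] (f : M →ₗ[A] N) (hf : Function.Surjective f) :
    len A M = len A (LinearMap.ker f) + len A N := by
  rw [len_exact (LinearMap.ker f), len_congr (f.quotKerEquivOfSurjective hf)]

theorem len_simple [IsSimpleModule A S] : len A S = 1 := by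
  rw [len, Module.length_eq_one]; rfl

theorem len_eq_zero [Module.Finite A M] : len A M = 0 ↔ Subsingleton M := by
  rw [← Module.length_eq_zero_iff (R := A), ← coe_len]; simp

theorem len_pos [Module.Finite A M] [Nontrivial M] : 0 < len A M := by
  rw [Nat.pos_iff_ne_zero, Ne, len_eq_zero]; exact not_subsingleton M

theorem len_lt [Module.Finite A M] {K : Submodule A M} (h : K ≠ ⊤) : len A K < len A M := by
  rw [len_exact K]
  have : Nontrivial (M ⧸ K) := Submodule.Quotient.nontrivial_iff.2 h
  have := len_pos (A := A) (M := M ⧸ K)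
  omega

theorem len_top : len A (⊤ : Submodule A M) = len A M := len_congr Submodule.topEquiv

theorem len_mono [Module.Finite A M] {K L : Submodule A M} (h : K ≤ L) : len A K ≤ len A L := by
  have := Module.length_le_of_injective (Submodule.inclusion h) (Submodule.inclusion_injective h)
  rw [← coe_len, ← coe_len] at this
  exact_mod_cast this

theorem Uni.eq_of_len [Module.Finite A M] (h : Uni A M) {K L : Submodule A M}
    (e : len A K = len A L) : K = L := by
  have key : ∀ {K L : Submodule A M}, K ≤ L → len A K = len A L → K = L := by
    intro K L hKL e
    by_contra hne
    have hlt := lt_of_le_of_ne hKL hne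
    have : K.comap L.subtype ≠ ⊤ := by
      intro h; exact hlt.not_ge (Submodule.comap_subtype_eq_top.1 h)
    have := len_lt this
    rw [len_congr (Submodule.comapSubtypeEquivOfLe hKL)] at this
    omega
  rcases h K L with h | h
  · exact key h e
  · exact (key h e.symm).symm


/-- projective cover of simples -/
theorem exists_cover (hN : ArtinAlg.IsNakayama A) [IsSimpleModule A S] :
    ∃ (P : ModuleCat.{0} A) (_ : Module.Finite A P) (_ : Module.Projective A P) (p : P →ₗ[A] S),
      Function.Surjective p ∧ Uni A P ∧ len A P ≤ len A A := by
  classical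
  let Q : ℕ → Prop := fun n => ∃ (P : ModuleCat.{0} A) (_ : Module.Finite A P)
    (_ : Module.Projective A P) (p : P →ₗ[A] S), Function.Surjective p ∧ len A P = n
  have h0 : Q (len A A) := by
    obtain ⟨m, hm⟩ := IsSimpleModule.nontrivial A S |>.exists_pair_ne |>.imp fun a h => h
    have : Nontrivial S := IsSimpleModule.nontrivial A S
    obtain ⟨s, hs⟩ := exists_ne (0 : S)
    refine ⟨ModuleCat.of A A, inferInstanceAs (Module.Finite A A),
      inferInstanceAs (Module.Projective A A), LinearMap.toSpanSingleton A S s, ?_, rfl⟩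
    exact IsSimpleModule.toSpanSingleton_surjective A hs
  have hex : ∃ n, Q n := ⟨_, h0⟩
  obtain ⟨P, hfin, hproj, p, hp, hlen⟩ := Nat.find_spec hex
  refine ⟨P, hfin, hproj, p, hp, ?_, hlen ▸ Nat.find_min' hex h0⟩
  apply nak hN
  have key : ∀ N₁ N₂ : Submodule A P, IsCompl N₁ N₂ → p ∘ₗ N₁.subtype ≠ 0 → N₂ = ⊥ := by
    intro N₁ N₂ hc h
    have hs := surj_of_ne_zero _ h
    by_contra hne
    have hN1 : N₁ ≠ ⊤ := by
      rintro rfl; exact hne (by simpa using hc.inf_eq_bot)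
    have hlt := len_lt hN1
    have hpr : Module.Projective A N₁ := by
      refine Module.Projective.of_split N₁.subtype (N₁.projectionOnto N₂ hc) ?_
      ext x; simp
    exact Nat.find_min hex (hlen ▸ hlt) ⟨ModuleCat.of A N₁, inferInstanceAs (Module.Finite A N₁),
      hpr, p ∘ₗ N₁.subtype, hs, rfl⟩
  intro N₁ N₂ hc
  by_cases h : p ∘ₗ N₁.subtype = 0
  · left
    apply key N₂ N₁ hc.symm
    intro h'
    have h1 : N₁ ≤ LinearMap.ker p := fun x hx => LinearMap.congr_fun h ⟨x, hx⟩
    have h2 : N₂ ≤ LinearMap.ker p := fun x hx => LinearMap.congr_fun h' ⟨x, hx⟩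
    have := hc.sup_eq_top ▸ sup_le h1 h2
    exact (coatom_ker p hp).1 (top_le_iff.1 this)
  · right; exact key _ _ hc h

end len

end NakPf

namespace NakPf
section arrow
variable {A : Type} [Ring A]

/-- a uniserial module with top `S` whose radical has top `T` exists -/
def Arrow (A : Type) [Ring A] (S T : Type) [AddCommGroup S] [Module A S]
    [AddCommGroup T] [Module A T] : Prop :=
  ∃ (M : ModuleCat.{0} A) (_ : Module.Finite A M) (_ : Uni A M) (f : M →ₗ[A] S)
    (_ : Function.Surjective f) (g : LinearMap.ker f →ₗ[A] T), Function.Surjective g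

variable {M M' S S' T T' J : Type} [AddCommGroup M] [Module A M] [AddCommGroup M'] [Module A M']
  [AddCommGroup S] [Module A S] [AddCommGroup T] [Module A T]
  [AddCommGroup S'] [Module A S'] [AddCommGroup T'] [Module A T'] [AddCommGroup J] [Module A J]

theorem Arrow.congr (h : Arrow A S T) (e : S ≃ₗ[A] S') (e' : T ≃ₗ[A] T') : Arrow A S' T' := by
  obtain ⟨M, h1, h2, f, hf, g, hg⟩ := h
  have hk : LinearMap.ker f = LinearMap.ker (e.toLinearMap ∘ₗ f) := by
    ext x; simp
  refine ⟨M, h1, h2, e.toLinearMap ∘ₗ f, e.surjective.comp hf,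
    e'.toLinearMap ∘ₗ g ∘ₗ (LinearEquiv.ofEq _ _ hk).symm.toLinearMap, ?_⟩
  exact e'.surjective.comp (hg.comp (LinearEquiv.surjective _))

/-- factor data of an arrow through a cover -/
theorem Arrow.cover (h : Arrow A S T) [IsSimpleModule A S] {P : Type} [AddCommGroup P] [Module A P]
    [Module.Projective A P] (p : P →ₗ[A] S) (hp : Function.Surjective p) :
    ∃ g : LinearMap.ker p →ₗ[A] T, Function.Surjective g := by
  obtain ⟨M, h1, h2, f, hf, g, hg⟩ := h
  obtain ⟨q, hq⟩ := Module.projective_lifting_property f p hf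
  have hqs : Function.Surjective q := by
    apply h2.surj f
    rw [hq]
    rintro rfl
    have : Nontrivial S := IsSimpleModule.nontrivial A S
    obtain ⟨s, hs⟩ := exists_ne (0 : S)
    obtain ⟨x, hx⟩ := hp s
    exact hs (by simpa using hx.symm)
  have hm : ∀ x ∈ LinearMap.ker p, q x ∈ LinearMap.ker f := by
    intro x hx
    have := LinearMap.congr_fun hq x
    simp only [LinearMap.comp_apply] at this
    rw [LinearMap.mem_ker, this]; exact hx
  refine ⟨g ∘ₗ q.restrict hm, hg.comp ?_⟩
  rintro ⟨y, hy⟩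
  obtain ⟨x, hx⟩ := hqs y
  refine ⟨⟨x, ?_⟩, Subtype.ext hx⟩
  rw [LinearMap.mem_ker, ← hq]; simpa [hx] using hy

theorem Arrow.right_unique [IsArtinianRing A] (hN : ArtinAlg.IsNakayama A)
    [IsSimpleModule A S] [IsSimpleModule A T] [IsSimpleModule A T']
    (h : Arrow A S T) (h' : Arrow A S T') : Nonempty (T ≃ₗ[A] T') := by
  obtain ⟨P, _, _, p, hp, hu, -⟩ := exists_cover (A := A) (S := S) hN
  obtain ⟨g, hg⟩ := h.cover p hp
  obtain ⟨g', hg'⟩ := h'.cover p hp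
  exact (hu.of_inj _ (LinearMap.ker p).subtype_injective).top_unique g hg g' hg'

theorem Arrow.short (h : Arrow A S T) : 
    ∃ (M : ModuleCat.{0} A) (_ : Module.Finite A M) (_ : Uni A M) (f : M →ₗ[A] S)
      (_ : Function.Surjective f) (i : T →ₗ[A] M), Function.Injective i ∧
      LinearMap.range i = LinearMap.ker f := by
  obtain ⟨M, h1, h2, f, hf, g, hg⟩ := h
  let K : Submodule A M := (LinearMap.ker g).map (LinearMap.ker f).subtype
  have hK : K ≤ LinearMap.ker f := Submodule.map_subtype_le _ _
  let e : (LinearMap.ker f ⧸ LinearMap.ker g) ≃ₗ[A] T := g.quotKerEquivOfSurjective hg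
  let j : (LinearMap.ker f ⧸ LinearMap.ker g) →ₗ[A] (M ⧸ K) :=
    Submodule.mapQ _ _ (LinearMap.ker f).subtype (Submodule.le_comap_map _ _)
  have hj : Function.Injective j := by
    rw [← LinearMap.ker_eq_bot, LinearMap.ker_eq_bot']
    intro x hx
    obtain ⟨x, rfl⟩ := Submodule.Quotient.mk_surjective _ x
    simp only [j, Submodule.mapQ_apply] at hx
    rw [Submodule.Quotient.mk_eq_zero] at hx ⊢
    obtain ⟨y, hy, hyx⟩ := hx
    have : y = x := Subtype.ext hyx
    exact this ▸ hy
  refine ⟨ModuleCat.of A (M ⧸ K), inferInstanceAs (Module.Finite A (M ⧸ K)),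
    h2.of_surj K.mkQ K.mkQ_surjective, K.liftQ f hK, ?_, j ∘ₗ e.symm.toLinearMap, ?_, ?_⟩
  · intro s; obtain ⟨m, rfl⟩ := hf s; exact ⟨K.mkQ m, by simp⟩
  · exact hj.comp e.symm.injective
  · rw [LinearMap.range_comp, LinearEquiv.range, Submodule.map_top]
    ext y
    obtain ⟨y, rfl⟩ := K.mkQ_surjective y
    constructor
    · rintro ⟨x, hx⟩
      obtain ⟨x, rfl⟩ := Submodule.Quotient.mk_surjective _ x
      rw [← hx]
      simp [j]
    · intro hy
      have hy : f y = 0 := by simpa using hy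
      exact ⟨Submodule.Quotient.mk ⟨y, hy⟩, by simp [j]⟩

theorem embed_aux [IsSimpleModule A S'] (N B : Submodule A J) (α : M' →ₗ[A] J)
    (hN : N ≤ B ⊔ LinearMap.range α) (hNB : N ⊓ B = ⊥) (hN0 : N ≠ ⊥)
    (f : M' →ₗ[A] S') (hf : Function.Surjective f) (hk : ∀ m, f m = 0 → α m ∈ B) :
    Nonempty (S' ≃ₗ[A] N) := by
  let φ : M' →ₗ[A] J ⧸ B := B.mkQ ∘ₗ α
  have hφ : LinearMap.ker f ≤ LinearMap.ker φ := by
    intro m hm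
    simpa [φ] using hk m hm
  let ψ : S' →ₗ[A] J ⧸ B :=
    (LinearMap.ker f).liftQ φ hφ ∘ₗ (f.quotKerEquivOfSurjective hf).symm.toLinearMap
  have hψ : ∀ m, ψ (f m) = B.mkQ (α m) := by
    intro m
    have : (f.quotKerEquivOfSurjective hf).symm (f m) = (LinearMap.ker f).mkQ m := by
      rw [LinearEquiv.symm_apply_eq]; rfl
    simp [ψ, this, φ]
  let ν : N →ₗ[A] J ⧸ B := B.mkQ ∘ₗ N.subtype
  have hν : Function.Injective ν := by
    rw [← LinearMap.ker_eq_bot, LinearMap.ker_eq_bot']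
    rintro ⟨x, hx⟩ h
    have : x ∈ B := by simpa [ν] using h
    have : x ∈ N ⊓ B := ⟨hx, this⟩
    rw [hNB] at this
    exact Subtype.ext (by simpa using this)
  have hr : LinearMap.range ν ≤ LinearMap.range ψ := by
    rintro _ ⟨⟨x, hx⟩, rfl⟩
    obtain ⟨b, hb, _, ⟨m, rfl⟩, rfl⟩ := Submodule.mem_sup.1 (hN hx)
    refine ⟨f m, ?_⟩
    rw [hψ]
    simp only [ν, LinearMap.comp_apply, Submodule.subtype_apply, map_add]
    rw [show B.mkQ b = 0 by simpa using hb, zero_add]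
  have hψ0 : ψ ≠ 0 := by
    intro h0
    apply hN0
    rw [Submodule.eq_bot_iff]
    intro x hx
    have := hr ⟨⟨x, hx⟩, rfl⟩
    rw [h0] at this
    have : ν ⟨x, hx⟩ = 0 := by simpa using this
    have := hν (this.trans (map_zero ν).symm)
    simpa using this
  have hψi : Function.Injective ψ := LinearMap.injective_of_ne_zero hψ0
  let e1 := LinearEquiv.ofInjective ψ hψi
  let e2 := LinearEquiv.ofInjective ν hν
  have : IsSimpleModule A (LinearMap.range ψ) := IsSimpleModule.congr e1.symm
  have hat := isSimpleModule_iff_isAtom.1 this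
  have heq : LinearMap.range ν = LinearMap.range ψ := by
    rcases hat.le_iff.1 hr with h | h
    · exfalso
      apply hN0
      rw [Submodule.eq_bot_iff]
      intro x hx
      rw [LinearMap.range_eq_bot] at h
      have := hν (a₁ := ⟨x, hx⟩) (a₂ := 0) (by simp [h])
      simpa using this
    · exact h
  exact ⟨e1 ≪≫ₗ LinearEquiv.ofEq _ _ heq.symm ≪≫ₗ e2.symm⟩

/-- in a uniserial submodule containing the atom `W`, being disjoint from `W` forces zero -/
theorem inf_aux (α : M →ₗ[A] J) (hu : Uni A M) (W N : Submodule A J) (hW : W ≤ LinearMap.range α)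
    (hW0 : W ≠ ⊥) (h : N ⊓ W = ⊥) : N ⊓ LinearMap.range α = ⊥ := by
  have hur : Uni A (LinearMap.range α) := hu.of_surj α.rangeRestrict α.surjective_rangeRestrict
  rcases hur (N.comap (LinearMap.range α).subtype) (W.comap (LinearMap.range α).subtype) with h1 | h1
  · rw [eq_bot_iff, ← h]
    rintro x ⟨hx, hx'⟩
    exact ⟨hx, h1 (show (⟨x, hx'⟩ : LinearMap.range α) ∈ _ from hx)⟩
  · exfalso; apply hW0
    rw [eq_bot_iff, ← h]
    intro x hx
    exact ⟨h1 (show (⟨x, hW hx⟩ : LinearMap.range α) ∈ _ from hx), hx⟩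

theorem inj_aux (hu : Uni A M) (i : T →ₗ[A] M) (α : M →ₗ[A] J) [Nontrivial T]
    (h : Function.Injective (α ∘ₗ i)) : Function.Injective α := by
  rw [← LinearMap.ker_eq_bot]
  rcases hu (LinearMap.ker α) (LinearMap.range i) with h1 | h1
  · rw [eq_bot_iff]
    intro x hx
    obtain ⟨t, rfl⟩ := h1 hx
    have : t = 0 := h (by simpa using hx)
    simp [this]
  · exfalso
    obtain ⟨t, ht⟩ := exists_ne (0 : T)
    exact ht (h (by simpa using h1 ⟨t, rfl⟩))

theorem le_aux [IsSimpleModule A S] [IsSimpleModule A S'] (hu : Uni A M) 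
    (f : M →ₗ[A] S) (hf : Function.Surjective f) (f' : M' →ₗ[A] S') 
    (i : T →ₗ[A] M) (i' : T →ₗ[A] M') (hi : LinearMap.range i = LinearMap.ker f)
    (hi' : LinearMap.range i' = LinearMap.ker f')
    (α : M →ₗ[A] J) (α' : M' →ₗ[A] J) (hα : Function.Injective α) (hα' : Function.Injective α')
    (hc : α ∘ₗ i = α' ∘ₗ i') (hle : LinearMap.range α ≤ LinearMap.range α') :
    Nonempty (S ≃ₗ[A] S') := by
  let e := LinearEquiv.ofInjective α' hα'
  let β : M →ₗ[A] M' := e.symm.toLinearMap ∘ₗ Submodule.inclusion hle ∘ₗ α.rangeRestrict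
  have hβ : ∀ m, α' (β m) = α m := by
    intro m
    have : e (β m) = Submodule.inclusion hle (α.rangeRestrict m) := by simp [β]
    simpa [e] using congrArg Subtype.val this
  have hne : f' ∘ₗ β ≠ 0 := by
    intro h0
    have hz : ∀ m, f m = 0 := by
      intro m
      have : β m ∈ LinearMap.ker f' := LinearMap.congr_fun h0 m
      rw [← hi'] at this
      obtain ⟨t, ht⟩ := this
      have h2 : α (i t) = α m := by
        rw [← hβ m, ← ht]; exact LinearMap.congr_fun hc t
      rw [← hα h2]
      have : i t ∈ LinearMap.ker f := hi ▸ ⟨t, rfl⟩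
      exact this
    have : Nontrivial S := IsSimpleModule.nontrivial A S
    obtain ⟨s, hs⟩ := exists_ne (0 : S)
    obtain ⟨m, rfl⟩ := hf s
    exact hs (hz m)
  exact hu.top_unique f hf _ (surj_of_ne_zero _ hne)

theorem Arrow.left_unique (hN : ArtinAlg.IsNakayama A)
    [IsSimpleModule A S] [IsSimpleModule A T] [IsSimpleModule A S']
    (h : Arrow A S T) (h' : Arrow A S' T) : Nonempty (S ≃ₗ[A] S') := by
  have hTn : Nontrivial T := IsSimpleModule.nontrivial A T
  obtain ⟨M, _, hu, f, hf, i, hii, hi⟩ := h.short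
  obtain ⟨M', _, hu', f', hf', i', hii', hi'⟩ := h'.short
  let J := Injective.under (ModuleCat.of A T)
  let ι : T →ₗ[A] J := (Injective.ι (ModuleCat.of A T)).hom
  have hι : Function.Injective ι := (ModuleCat.mono_iff_injective (Injective.ι (ModuleCat.of A T))).1 inferInstance
  have ext : ∀ (M : ModuleCat.{0} A) (i : T →ₗ[A] M), Function.Injective i →
      ∃ α : M →ₗ[A] J, α ∘ₗ i = ι := by
    intro M i hi
    have : Mono (ModuleCat.ofHom i) := (ModuleCat.mono_iff_injective (ModuleCat.ofHom i)).2 hi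
    refine ⟨(Injective.factorThru (Injective.ι (ModuleCat.of A T)) (ModuleCat.ofHom i)).hom, ?_⟩
    exact congrArg ModuleCat.Hom.hom (Injective.comp_factorThru (Injective.ι (ModuleCat.of A T)) (ModuleCat.ofHom i))
  obtain ⟨α, hα⟩ := ext M i hii
  obtain ⟨α', hα'⟩ := ext M' i' hii'
  have hαi := inj_aux hu i α (hα ▸ hι)
  have hαi' := inj_aux hu' i' α' (hα' ▸ hι)
  set B := LinearMap.range α with hB
  set B' := LinearMap.range α' with hB'
  set W := LinearMap.range ι with hW
  have hWB : W ≤ B := by rw [hW, ← hα]; exact LinearMap.range_comp_le_range _ _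
  have hWB' : W ≤ B' := by rw [hW, ← hα']; exact LinearMap.range_comp_le_range _ _
  have hWs : IsSimpleModule A W := IsSimpleModule.congr (LinearEquiv.ofInjective ι hι).symm
  have hWa := isSimpleModule_iff_isAtom.1 hWs
  have hkW : ∀ m, f m = 0 → α m ∈ W := by
    intro m hm
    have : m ∈ LinearMap.range i := hi ▸ hm
    obtain ⟨t, rfl⟩ := this
    exact ⟨t, by rw [← hα]; rfl⟩
  have hkW' : ∀ m, f' m = 0 → α' m ∈ W := by
    intro m hm
    have : m ∈ LinearMap.range i' := hi' ▸ hm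
    obtain ⟨t, rfl⟩ := this
    exact ⟨t, by rw [← hα']; rfl⟩
  have key : ∀ N : Submodule A J, N ≤ B ⊔ B' → N ≠ ⊥ → N ⊓ W = ⊥ → Nonempty (S ≃ₗ[A] S') := by
    intro N hNE hN0 hNW
    have h1 : N ⊓ B = ⊥ := inf_aux α hu W N hWB hWa.1 hNW
    have h2 : N ⊓ B' = ⊥ := inf_aux α' hu' W N hWB' hWa.1 hNW
    obtain ⟨e'⟩ := embed_aux N B α' hNE h1 hN0 f' hf' (fun m hm => hWB (hkW' m hm))
    obtain ⟨e⟩ := embed_aux N B' α (sup_comm B B' ▸ hNE) h2 hN0 f hf (fun m hm => hWB' (hkW m hm))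
    exact ⟨e ≪≫ₗ e'.symm⟩
  let E : Submodule A J := B ⊔ B'
  have hEfg : E.FG := by
    apply Submodule.FG.sup
    · rw [hB, LinearMap.range_eq_map]; exact (Module.Finite.fg_top).map α
    · rw [hB', LinearMap.range_eq_map]; exact (Module.Finite.fg_top).map α'
  have : Module.Finite A E := Module.Finite.iff_fg.2 hEfg
  by_cases hE : ∀ N₁ N₂ : Submodule A E, IsCompl N₁ N₂ → N₁ = ⊥ ∨ N₂ = ⊥
  · have hEu := nak hN hE
    rcases hEu (B.comap E.subtype) (B'.comap E.subtype) with hle | hle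
    · have : B ≤ B' := fun x hx => hle (show (⟨x, le_sup_left (a := B) hx⟩ : E) ∈ _ from hx)
      exact le_aux hu f hf f' i i' hi hi' α α' hαi hαi' (hα.trans hα'.symm) this
    · have : B' ≤ B := fun x hx => hle (show (⟨x, le_sup_right (a := B) hx⟩ : E) ∈ _ from hx)
      obtain ⟨e⟩ := le_aux hu' f' hf' f i' i hi' hi α' α hαi' hαi (hα'.trans hα.symm) this
      exact ⟨e.symm⟩
  · push Not at hE
    obtain ⟨N₁, N₂, hc, h1, h2⟩ := hE
    have hne : ∀ N : Submodule A E, N ≠ ⊥ → N.map E.subtype ≠ ⊥ := by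
      intro N hN h
      exact hN (Submodule.map_injective_of_injective E.subtype_injective (h.trans (Submodule.map_bot _).symm))
    have hd : N₁.map E.subtype ⊓ N₂.map E.subtype = ⊥ := by
      rw [← Submodule.map_inf _ E.subtype_injective, hc.inf_eq_bot, Submodule.map_bot]
    by_cases hW1 : W ≤ N₁.map E.subtype
    · have hW2 : N₂.map E.subtype ⊓ W = ⊥ := by
        rw [eq_bot_iff, ← hd]
        exact le_inf (inf_le_right.trans hW1) inf_le_left
      exact key _ (Submodule.map_subtype_le _ _) (hne _ h2) hW2
    · have hW2 : N₁.map E.subtype ⊓ W = ⊥ := by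
        rcases hWa.le_iff.1 (inf_le_right : N₁.map E.subtype ⊓ W ≤ W) with h | h
        · exact h
        · exact absurd (inf_eq_right.1 h) hW1
      exact key _ (Submodule.map_subtype_le _ _) (hne _ h1) hW2

end arrow
end NakPf

namespace NakPf
section comb

/-- numerical criterion for projective dimension `< d` -/
def Z (f : ℤ → ℤ) : ℕ → ℤ → ℤ → Prop
  | 0, a, b => a = b
  | d + 1, a, b => a = b ∨ Z f d b (f a)

theorem Z_even (f : ℤ → ℤ) (k : ℕ) : ∀ a b, Z f (2 * k + 1) a b → ¬ Z f (2 * k) a b →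
    f^[k] b = f^[k + 1] a := by
  induction k with
  | zero =>
    intro a b h h'
    simp only [Z] at h h'
    simpa using h.resolve_left h'
  | succ k ih =>
    intro a b h h'
    have e1 : 2 * (k + 1) + 1 = (2 * k + 1) + 1 + 1 := by ring
    have e2 : 2 * (k + 1) = (2 * k) + 1 + 1 := by ring
    rw [e1] at h
    rw [e2] at h'
    simp only [Z] at h h' ih
    have := ih (f a) (f b) (by tauto) (by tauto)
    simpa using this

theorem Z_odd (f : ℤ → ℤ) (k : ℕ) : ∀ a b, Z f (2 * k + 2) a b → ¬ Z f (2 * k + 1) a b →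
    f^[k + 1] a = f^[k + 1] b := by
  induction k with
  | zero =>
    intro a b h h'
    simp only [Z] at h h'
    simp; tauto
  | succ k ih =>
    intro a b h h'
    have e1 : 2 * (k + 1) + 2 = (2 * k + 2) + 1 + 1 := by ring
    have e2 : 2 * (k + 1) + 1 = (2 * k + 1) + 1 + 1 := by ring
    rw [e1] at h
    rw [e2] at h'
    simp only [Z] at h h' ih
    have := ih (f a) (f b) (by tauto) (by tauto)
    simpa using this

theorem Z_of (f : ℤ → ℤ) (m : ℕ) : ∀ a b, (f^[m] b = f^[m] a ∨ f^[m] b = f^[m + 1] a) →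
    Z f (2 * m + 1) a b := by
  induction m with
  | zero => intro a b h; simp only [Z]; simp at h; tauto
  | succ k ih =>
    intro a b h
    have e1 : 2 * (k + 1) + 1 = (2 * k + 1) + 1 + 1 := by ring
    rw [e1]
    have := ih (f a) (f b) (by simpa using h)
    simp only [Z] at this ⊢
    tauto


theorem iter_per (f : ℤ → ℤ) (hf : Monotone f) (hlt : ∀ x, x < f x) (n : ℕ) (hn : 0 < n)
    (hper : ∀ x, f (x + n) = f x + n) (m : ℕ) (x : ℤ) : f^[m] (x + n) = f^[m] x + n := by
  induction m generalizing x with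
  | zero => rfl
  | succ m ih => simp [hper, ih]

theorem iter_per_nat (f : ℤ → ℤ) (hf : Monotone f) (hlt : ∀ x, x < f x) (n : ℕ) (hn : 0 < n)
    (hper : ∀ x, f (x + n) = f x + n) (m : ℕ) (x : ℤ) (k : ℕ) : f^[m] (x + k * n) = f^[m] x + k * n := by
  induction k with
  | zero => simp
  | succ k ih =>
    have : x + ((k + 1 : ℕ) : ℤ) * n = (x + k * n) + n := by push_cast; ring
    rw [this, iter_per f hf hlt n hn hper, ih]; push_cast; ring

theorem iter_per_int (f : ℤ → ℤ) (hf : Monotone f) (hlt : ∀ x, x < f x) (n : ℕ) (hn : 0 < n)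
    (hper : ∀ x, f (x + n) = f x + n) (m : ℕ) (x : ℤ) (k : ℤ) : f^[m] (x + k * n) = f^[m] x + k * n := by
  obtain ⟨k, rfl | rfl⟩ := k.eq_nat_or_neg
  · exact iter_per_nat f hf hlt n hn hper m x k
  · have := iter_per_nat f hf hlt n hn hper m (x + -(k : ℤ) * n) k
    have e : x + -(k : ℤ) * n + k * n = x := by ring
    rw [e] at this
    linarith

theorem stab (f : ℤ → ℤ) (hf : Monotone f) (hlt : ∀ x, x < f x) (n : ℕ) (hn : 0 < n)
    (hper : ∀ x, f (x + n) = f x + n) : ∃ M : ℕ, ∀ m, M ≤ m → Set.range f^[m] = Set.range f^[M] := by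
  have hanti : ∀ m, Set.range f^[m + 1] ⊆ Set.range f^[m] := by
    rintro m _ ⟨x, rfl⟩
    exact ⟨f x, rfl⟩
  let g : ℕ → (Set (Fin n))ᵒᵈ := fun m => OrderDual.toDual {r | ((r : ℕ) : ℤ) ∈ Set.range f^[m]}
  have hg : Monotone g := by
    apply monotone_nat_of_le_succ
    intro m r hr
    exact hanti m hr
  obtain ⟨M, hM⟩ := WellFoundedGT.monotone_chain_condition (⟨g, hg⟩ : ℕ →o (Set (Fin n))ᵒᵈ)
  have hmem : ∀ m (y : ℤ), y ∈ Set.range f^[m] ↔ y % n ∈ Set.range f^[m] := by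
    intro m y
    have e : y = y % n + (y / n) * n := by rw [mul_comm]; exact (Int.emod_add_mul_ediv y n).symm
    constructor
    · rintro ⟨x, hx⟩
      refine ⟨x + (-(y / n)) * n, ?_⟩
      rw [iter_per_int f hf hlt n hn hper, hx]; linarith
    · rintro ⟨x, hx⟩
      refine ⟨x + (y / n) * n, ?_⟩
      rw [iter_per_int f hf hlt n hn hper, hx]; linarith
  refine ⟨M, fun m hm => ?_⟩
  have := hM m hm
  have h2 : {r : Fin n | ((r : ℕ) : ℤ) ∈ Set.range f^[M]} = {r : Fin n | ((r : ℕ) : ℤ) ∈ Set.range f^[m]} := this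
  ext y
  rw [hmem m, hmem M]
  have h0 : 0 ≤ y % n := Int.emod_nonneg _ (by omega)
  have h1 : y % n < n := Int.emod_lt_of_pos _ (by omega)
  have h3 := Set.ext_iff.1 h2 ⟨(y % n).toNat, by omega⟩
  simp only [Set.mem_ofPred_eq, Int.toNat_of_nonneg h0] at h3
  exact h3.symm

theorem comb_main (f : ℤ → ℤ) (hf : Monotone f) (hlt : ∀ x, x < f x) (n : ℕ) (hn : 0 < n)
    (hper : ∀ x, f (x + n) = f x + n) (i : ℤ) (k : ℕ) (h : f^[k] (i + 1) = f^[k + 1] i) (j : ℤ) :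
    ∃ m, f^[m] (j + 1) = f^[m] j ∨ f^[m] (j + 1) = f^[m + 1] j := by
  obtain ⟨M, hM⟩ := stab f hf hlt n hn hper
  have hup : ∀ t, f^[k + t] (i + 1) = f^[k + t + 1] i := by
    intro t
    induction t with
    | zero => exact h
    | succ t ih =>
      have e1 := Function.iterate_succ_apply' f (k + t) (i + 1)
      have e2 := Function.iterate_succ_apply' f (k + t + 1) i
      rw [← add_assoc, e1, ih, ← e2]
  let m := k + M
  let x := f^[m] i
  have hgap : ∀ t y, y ∈ Set.range f^[m] → y ≤ f^[t] x ∨ f^[t + 1] x ≤ y := by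
    intro t y hy
    have : y ∈ Set.range f^[m + t] := by
      rw [hM _ (by omega)]; rw [hM m (by omega)] at hy; exact hy
    obtain ⟨p, rfl⟩ := this
    have e1 : f^[t] x = f^[m + t] i := by rw [add_comm, Function.iterate_add_apply]
    have e2 : f^[t + 1] x = f^[m + t] (i + 1) := by
      have := hup (M + t)
      rw [← add_assoc] at this
      rw [this]
      change f^[t + 1] (f^[m] i) = _
      rw [← Function.iterate_add_apply, show t + 1 + m = k + M + t + 1 by simp only [m]; omega]
    rw [e1, e2]
    rcases le_or_gt p i with h | h
    · left; exact (hf.iterate _) h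
    · right; exact (hf.iterate _) h
  have hgrow : ∀ t : ℕ, x + t ≤ f^[t] x := by
    intro t
    induction t with
    | zero => simp
    | succ t ih =>
      rw [Function.iterate_succ_apply']
      have := hlt (f^[t] x)
      push_cast; omega
  have main : ∀ j, x ≤ f^[m] j → f^[m] (j + 1) = f^[m] j ∨ f^[m] (j + 1) = f^[m + 1] j := by
    intro j hj
    have hex : ∃ t, f^[m] j < f^[t] x := by
      refine ⟨(f^[m] j - x).toNat + 1, ?_⟩
      have := hgrow ((f^[m] j - x).toNat + 1)
      push_cast at this; omega
    classical
    obtain ⟨t, ht⟩ : ∃ t, Nat.find hex = t + 1 := by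
      refine Nat.exists_eq_succ_of_ne_zero ?_
      intro h0
      have := Nat.find_spec hex
      rw [h0] at this
      simp at this; omega
    have h1 := Nat.find_spec hex
    rw [ht] at h1
    have h2 := Nat.find_min hex (m := t) (by omega)
    have h3 : f^[m] j = f^[t] x := by
      rcases hgap t (f^[m] j) ⟨j, rfl⟩ with h | h <;> omega
    have h4 : f^[m] j ≤ f^[m] (j + 1) := (hf.iterate _) (by omega)
    have h5 : f^[m] (j + 1) ≤ f^[m + 1] j := by
      rw [Function.iterate_succ_apply]
      exact (hf.iterate _) (hlt j)
    have h6 : f^[m + 1] j = f^[t + 1] x := by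
      rw [Function.iterate_succ_apply', h3, Function.iterate_succ_apply']
    rcases hgap t (f^[m] (j + 1)) ⟨_, rfl⟩ with h | h
    · left; omega
    · right; omega
  refine ⟨m, ?_⟩
  let K : ℤ := |x - f^[m] j|
  have hn1 : (1 : ℤ) ≤ n := by exact_mod_cast hn
  have hK : x ≤ f^[m] (j + K * n) := by
    rw [iter_per_int f hf hlt n hn hper]
    have h1 : x - f^[m] j ≤ K := le_abs_self _
    have h2 : K ≤ K * n := le_mul_of_one_le_right (abs_nonneg _) hn1
    omega
  have := main _ hK
  rw [show j + K * n + 1 = (j + 1) + K * n by ring, iter_per_int f hf hlt n hn hper,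
    iter_per_int f hf hlt n hn hper, iter_per_int f hf hlt n hn hper] at this
  simpa using this

theorem comb_inj (f : ℤ → ℤ) (hf : Monotone f) (hlt : ∀ x, x < f x)
    (i j : ℤ) (k : ℕ) (h : f^[k] i = f^[k] j) (hm : f (i - 1) ≤ j - 1) :
    f^[k] ((i - 1) + 1) = f^[k + 1] (i - 1) := by
  have h1 : f^[k + 1] (i - 1) ≤ f^[k] (j - 1) := by
    rw [Function.iterate_succ_apply]; exact hf.iterate _ hm
  have h2 : f^[k] i ≤ f^[k + 1] (i - 1) := by
    rw [Function.iterate_succ_apply]; apply hf.iterate; have := hlt (i - 1); omega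
  have h3 : f^[k] (j - 1) ≤ f^[k] j := hf.iterate _ (by omega)
  rw [sub_add_cancel]
  omega

end comb
end NakPf

namespace NakPf
section pd
variable {A : Type} [Ring A]

/-- projective dimension `< n` -/
abbrev PD (A : Type) [Ring A] (M : Type) [AddCommGroup M] [Module A M] (n : ℕ) : Prop :=
  HasProjectiveDimensionLT (ModuleCat.of A M) n

variable {K P M : Type} [AddCommGroup K] [Module A K] [AddCommGroup M] [Module A M]
  [AddCommGroup P] [Module A P]

theorem PD.congr (e : M ≃ₗ[A] P) {n : ℕ} (h : PD A M n) : PD A P n :=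
  hasProjectiveDimensionLT_of_iso e.toModuleIso n

theorem PD.mono {n m : ℕ} (hnm : n ≤ m) (h : PD A M n) : PD A M m :=
  hasProjectiveDimensionLT_of_ge _ _ _ hnm

theorem PD.zero_iff : PD A M 0 ↔ Subsingleton M := by
  rw [PD, hasProjectiveDimensionLT_zero_iff_isZero, ModuleCat.isZero_iff_subsingleton]

theorem PD.one_iff : PD A M 1 ↔ Module.Projective A M := by
  rw [PD, ← projective_iff_hasProjectiveDimensionLT_one, IsProjective.iff_projective]

theorem PD.sub [Subsingleton M] (n : ℕ) : PD A M n :=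
  PD.mono (Nat.zero_le n) (PD.zero_iff.2 ‹_›)

theorem se (g : P →ₗ[A] M) (hg : Function.Surjective g) : 
    (ModuleCat.shortComplexOfCompEqZero (LinearMap.ker g).subtype g
      (LinearMap.comp_ker_subtype g)).ShortExact :=
  ModuleCat.shortComplex_shortExact _ (LinearMap.exact_subtype_ker_map g)
     (LinearMap.ker g).subtype_injective hg

theorem PD.ext (g : P →ₗ[A] M) (hg : Function.Surjective g) (n : ℕ)
    (h1 : PD A (LinearMap.ker g) n) (h2 : PD A M n) : PD A P n :=
  (se g hg).hasProjectiveDimensionLT_X₂ n h1 h2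

theorem PD.quot (g : P →ₗ[A] M) (hg : Function.Surjective g) [Module.Projective A P] (n : ℕ)
    (h1 : PD A (LinearMap.ker g) n) : PD A M (n + 1) :=
  (se g hg).hasProjectiveDimensionLT_X₃ n h1 (PD.mono (by omega) (PD.one_iff.2 ‹_›))

theorem PD.ker (g : P →ₗ[A] M) (hg : Function.Surjective g) [Module.Projective A P] (n : ℕ)
    (h1 : PD A M (n + 2)) : PD A (LinearMap.ker g) (n + 1) :=
  (se g hg).hasProjectiveDimensionLT_X₁ (n + 1) (PD.mono (by omega) (PD.one_iff.2 ‹_›)) h1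

theorem PD.retract {n : ℕ} (i : M →ₗ[A] P) (r : P →ₗ[A] M) (h : r ∘ₗ i = LinearMap.id) (hP : PD A P n) :
    PD A M n :=
  Retract.hasProjectiveDimensionLT (X := ModuleCat.of A M) (Y := ModuleCat.of A P)
   { i := ModuleCat.ofHom i, r := ModuleCat.ofHom r, retract := by
      rw [← ModuleCat.ofHom_comp, h]; rfl } n

theorem projFinsupp (ι M : Type) [AddCommGroup M] [Module A M] [Module.Projective A M] :
    Module.Projective A (ι →₀ M) := by
  classical
  exact Module.Projective.of_equiv (finsuppLequivDFinsupp (ι := ι) (M := M) A).symm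

theorem PD.finsupp_aux (ι Q : Type) [AddCommGroup Q] [Module A Q] [Module.Projective A Q]
    (g : Q →ₗ[A] M) (hg : Function.Surjective g) (n : ℕ) (h : PD A (ι →₀ LinearMap.ker g) n) :
    PD A (ι →₀ M) (n + 1) := by
  let G : (ι →₀ Q) →ₗ[A] (ι →₀ M) := Finsupp.mapRange.linearMap g
  have hG : Function.Surjective G := Finsupp.mapRange_surjective _ (map_zero g) hg
  have := projFinsupp (A := A) ι Q
  refine PD.quot (P := ι →₀ Q) G hG n ?_
  let φ : (ι →₀ LinearMap.ker g) →ₗ[A] (ι →₀ Q) :=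
    Finsupp.mapRange.linearMap (LinearMap.ker g).subtype
  have hφ : Function.Injective φ :=
    Finsupp.mapRange_injective _ (map_zero (LinearMap.ker g).subtype)
      (LinearMap.ker g).subtype_injective
  have hr : LinearMap.range φ = LinearMap.ker G := by
    ext x
    constructor
    · rintro ⟨y, rfl⟩
      ext i
      exact (y i).2
    · intro hx
      have hx' : ∀ i, x i ∈ LinearMap.ker g := fun i => DFunLike.congr_fun hx i
      refine ⟨x.mapRange (fun q => by classical exact if h : q ∈ LinearMap.ker g then ⟨q, h⟩ else 0) ?_, ?_⟩
      · simp
      · ext i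
        simp [φ, hx' i]
  exact PD.congr (LinearEquiv.ofInjective φ hφ ≪≫ₗ LinearEquiv.ofEq _ _ hr) h

theorem PD.finsupp (ι : Type) : ∀ (n : ℕ) (M : Type) [AddCommGroup M] [Module A M], PD A M n →
    PD A (ι →₀ M) n := by
  intro n
  induction n with
  | zero =>
    intro M _ _ h
    rw [PD.zero_iff] at h ⊢
    infer_instance
  | succ n ih =>
    intro M _ _ h
    rcases n with _ | n
    · rw [zero_add, PD.one_iff] at h ⊢
      exact projFinsupp ι M
    · let g : (M →₀ A) →ₗ[A] M := Finsupp.linearCombination A id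
      have hg : Function.Surjective g := Finsupp.linearCombination_id_surjective A M
      exact PD.finsupp_aux ι _ g hg _ (ih _ (PD.ker g hg n h))

theorem PD.of_le {n : ℕ} (M : ModuleCat.{0} A) (h : ArtinAlg.ProjDimLE A n M) :
    HasProjectiveDimensionLT M (n + 1) := by
  induction h with
  | zero M h => infer_instance
  | succ n M P f hP hf h ih =>
    have hs : (ShortComplex.mk _ _ (kernel.condition f)).ShortExact :=
      { exact := ShortComplex.exact_kernel f }
    exact hs.hasProjectiveDimensionLT_X₃ (n + 1) ih inferInstance

theorem le_of_PD {n : ℕ} (M : ModuleCat.{0} A) (h : HasProjectiveDimensionLT M (n + 1)) :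
    ArtinAlg.ProjDimLE A n M := by
  induction n generalizing M with
  | zero => exact .zero M ((projective_iff_hasProjectiveDimensionLT_one).2 h)
  | succ n ih =>
    have hs : (ShortComplex.mk _ _ (kernel.condition (Projective.π M))).ShortExact :=
      { exact := ShortComplex.exact_kernel _ }
    refine .succ n M (Projective.over M) (Projective.π M) inferInstance inferInstance (ih _ ?_)
    exact hs.hasProjectiveDimensionLT_X₁ (n + 1) inferInstance h

theorem projDim_le {n : ℕ} (M : ModuleCat.{0} A) (h : HasProjectiveDimensionLT M (n + 1)) :
    ArtinAlg.projDim A M ≤ n :=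
  sInf_le ⟨n, rfl, le_of_PD M h⟩

theorem projDim_eq {n : ℕ} (M : ModuleCat.{0} A) (h : ArtinAlg.projDim A M = n) [Nontrivial M] :
    PD A M (n + 1) ∧ ¬ PD A M n := by
  have hne : {d : ℕ∞ | ∃ n : ℕ, d = n ∧ ArtinAlg.ProjDimLE A n M}.Nonempty := by
    by_contra hne
    rw [Set.not_nonempty_iff_eq_empty] at hne
    rw [ArtinAlg.projDim, hne, sInf_empty] at h
    exact absurd h (ENat.top_ne_natCast n)
  have hmem := csInf_mem hne
  obtain ⟨m, hm, hM⟩ := hmem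
  have : n = m := by
    rw [ArtinAlg.projDim] at h
    rw [h] at hm; exact_mod_cast hm
  subst this
  refine ⟨PD.of_le M hM, ?_⟩
  intro hn
  rcases n with _ | n
  · exact not_subsingleton M (PD.zero_iff.1 hn)
  · have := projDim_le M hn
    rw [h] at this
    have : n + 1 ≤ n := by exact_mod_cast this
    omega

/-- all simples of finite projective dimension implies finite length modules too -/
theorem PD.finite_len [IsArtinianRing A]
    (h : ∀ S : ModuleCat.{0} A, IsSimpleModule A S → ∃ n, PD A S n) :
    ∀ (l : ℕ) (M : Type) [AddCommGroup M] [Module A M] [Module.Finite A M], len A M = l →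
      ∃ n, PD A M n := by
  intro l
  induction l with
  | zero => intro M _ _ _ hl; exact ⟨0, PD.zero_iff.2 (len_eq_zero.1 hl)⟩
  | succ l ih =>
    intro M _ _ _ hl
    have : Nontrivial M := by
      by_contra hc
      rw [not_nontrivial_iff_subsingleton] at hc
      have := (len_eq_zero (A := A)).2 hc; omega
    obtain ⟨S, hS, f, hf⟩ := exists_top (A := A) (M := M)
    obtain ⟨n, hn⟩ := h S hS
    have hk := len_ker f hf
    rw [len_simple (S := S)] at hk
    obtain ⟨m, hm⟩ := ih (LinearMap.ker f) (by omega)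
    exact ⟨max n m, PD.ext f hf _ (PD.mono (le_max_right _ _) hm) (PD.mono (le_max_left _ _) hn)⟩

theorem ss_quot [IsArtinianRing A] : IsSemisimpleModule A (A ⧸ Ring.jacobson A) := by
  have h0 : IsSemisimpleRing (A ⧸ Ring.jacobson A) := IsSemiprimaryRing.isSemisimpleRing
  let l : (A ⧸ Ring.jacobson A) →ₛₗ[Ideal.Quotient.mk (Ring.jacobson A)] (A ⧸ Ring.jacobson A) :=
    { toFun := id
      map_add' := fun _ _ => rfl
      map_smul' := fun r x => by
        obtain ⟨x, rfl⟩ := Ideal.Quotient.mk_surjective x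
        rfl }
  have : RingHomSurjective (Ideal.Quotient.mk (Ring.jacobson A)) := ⟨Ideal.Quotient.mk_surjective⟩
  exact (l.isSemisimpleModule_iff_of_bijective Function.bijective_id).2 h0

theorem gldim [IsArtinianRing A]
    (h : ∀ S : ModuleCat.{0} A, IsSimpleModule A S → ∃ n, PD A S n) :
    ∃ n : ℕ, ∀ M : ModuleCat.{0} A, ArtinAlg.projDim A M ≤ n := by
  obtain ⟨n, hn⟩ := PD.finite_len h _ (A ⧸ Ring.jacobson A) rfl
  have key : ∀ (M : Type) [AddCommGroup M] [Module A M], PD A M n := by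
    intro M _ _
    refine IsSemiprimaryRing.induction A A M (P := fun M _ _ _ => PD A M n) ?_ ?_
    · intro M _ _ _ _ hss hJ
      have := ss_quot (A := A)
      let φ : (M →₀ (A ⧸ Ring.jacobson A)) →ₗ[A] M := Finsupp.lsum ℕ fun m =>
        Submodule.liftQ (Ring.jacobson A) (LinearMap.toSpanSingleton A M m) (by
          intro a ha
          exact @hJ m ⟨a, ha⟩)
      have hφ : Function.Surjective φ := fun m =>
        ⟨Finsupp.single m (Submodule.Quotient.mk 1), by
          simp only [φ, Finsupp.lsum_single]
          exact (Submodule.liftQ_apply _ _ _).trans (one_smul _ _)⟩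
      obtain ⟨s, hs⟩ := IsSemisimpleModule.lifting_property φ hφ LinearMap.id
      exact PD.retract s φ hs (PD.finsupp M n _ hn)
    · intro M _ _ _ _ N h1 h2
      exact PD.ext (Submodule.mkQ _) (Submodule.mkQ_surjective _) n
        (PD.congr (LinearEquiv.ofEq _ _ (Submodule.ker_mkQ _).symm) h1) h2
  exact ⟨n, fun M => projDim_le M (PD.mono (Nat.le_succ n) (key M))⟩
end pd
end NakPf

namespace NakPf
section conn
variable {A : Type} [Ring A]

theorem simple_sub [IsArtinianRing A] (S : Type) [AddCommGroup S] [Module A S] [IsSimpleModule A S] :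
    ∃ N : Submodule A (A ⧸ Ring.jacobson A), Nonempty (N ≃ₗ[A] S) := by
  have := ss_quot (A := A)
  have : Nontrivial S := IsSimpleModule.nontrivial A S
  obtain ⟨s, hs⟩ := exists_ne (0 : S)
  let φ : (A ⧸ Ring.jacobson A) →ₗ[A] S :=
    Submodule.liftQ (Ring.jacobson A) (LinearMap.toSpanSingleton A S s) (by
      intro a ha
      exact Module.mem_annihilator.1 (IsSemisimpleModule.jacobson_le_annihilator A S ha) s)
  have hφ : φ ≠ 0 := by
    intro h
    have := LinearMap.congr_fun h (Submodule.Quotient.mk 1)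
    have h2 : φ (Submodule.Quotient.mk 1) = (1 : A) • s := Submodule.liftQ_apply _ _ _
    rw [this, one_smul] at h2
    exact hs h2.symm
  obtain ⟨N, ⟨e⟩⟩ := IsSemisimpleModule.exists_submodule_linearEquiv_quotient (LinearMap.ker φ)
  exact ⟨N, ⟨e ≪≫ₗ φ.quotKerEquivOfSurjective (surj_of_ne_zero φ hφ)⟩⟩

theorem pigeon [IsArtinianRing A] (S : ℕ → ModuleCat.{0} A) (hS : ∀ i, IsSimpleModule A (S i)) :
    ∃ i j, i < j ∧ Nonempty (S i ≃ₗ[A] S j) := by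
  have hs : ∀ i, ∃ N : Submodule A (A ⧸ Ring.jacobson A), Nonempty (N ≃ₗ[A] S i) :=
    fun i => simple_sub (S i)
  choose N hN using hs
  have hNs : ∀ i, IsSimpleModule A (N i) := fun i => IsSimpleModule.congr (hN i).some
  let F : ℕ → isotypicComponents A (A ⧸ Ring.jacobson A) := fun i =>
    ⟨isotypicComponent A _ (N i), N i, hNs i, rfl⟩
  obtain ⟨i, j, hij, h⟩ := Finite.exists_ne_map_eq_of_infinite F
  have key : ∀ i j, F i = F j → Nonempty (S i ≃ₗ[A] S j) := by
    intro i j h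
    have h' : isotypicComponent A _ (N i) = isotypicComponent A _ (N j) := congrArg Subtype.val h
    have h1 : N i ≤ isotypicComponent A _ (N j) := h' ▸ (N i).le_isotypicComponent
    have h2 := IsIsotypicOfType.isotypicComponent A (A ⧸ Ring.jacobson A) (N j)
    rw [isIsotypicOfType_submodule_iff] at h2
    obtain ⟨e⟩ := h2 (N i) h1
    exact ⟨(hN i).some.symm ≪≫ₗ e ≪≫ₗ (hN j).some⟩
  rcases lt_or_gt_of_ne hij with h1 | h1
  · exact ⟨i, j, h1, key i j h⟩
  · exact ⟨j, i, h1, key j i h.symm⟩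

/-- every projective cover of a simple outside `C` maps trivially to `M` -/
def Pure (C : ModuleCat.{0} A → Prop) (M : Type) [AddCommGroup M] [Module A M] : Prop :=
  ∀ (S : ModuleCat.{0} A) (_ : IsSimpleModule A S) (_ : ¬ C S) (P : ModuleCat.{0} A)
    (_ : Module.Finite A P) (_ : Module.Projective A P) (_ : Uni A P) (p : P →ₗ[A] S)
    (_ : Function.Surjective p) (f : P →ₗ[A] M), f = 0

variable {M N : Type} [AddCommGroup M] [Module A M] [AddCommGroup N] [Module A N]
  {C : ModuleCat.{0} A → Prop}

theorem Pure.of_surj (h : Pure C M) (q : M →ₗ[A] N) (hq : Function.Surjective q) : Pure C N := by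
  intro S hS hC P h1 h2 h3 p hp f
  obtain ⟨g, rfl⟩ := Module.projective_lifting_property q f hq
  rw [h S hS hC P h1 h2 h3 p hp g, LinearMap.comp_zero]

theorem Pure.of_inj (h : Pure C M) (q : N →ₗ[A] M) (hq : Function.Injective q) : Pure C N := by
  intro S hS hC P h1 h2 h3 p hp f
  have := h S hS hC P h1 h2 h3 p hp (q ∘ₗ f)
  ext x
  exact hq (by simpa using LinearMap.congr_fun this x)

theorem Pure.prod (h : Pure C M) (h' : Pure C N) : Pure C (M × N) := by
  intro S hS hC P h1 h2 h3 p hp f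
  have e1 := h S hS hC P h1 h2 h3 p hp (LinearMap.fst A M N ∘ₗ f)
  have e2 := h' S hS hC P h1 h2 h3 p hp (LinearMap.snd A M N ∘ₗ f)
  ext x
  · exact LinearMap.congr_fun e1 x
  · exact LinearMap.congr_fun e2 x

theorem Pure.sup {X Y : Submodule A M} (h : Pure C X) (h' : Pure C Y) : 
    Pure C (X ⊔ Y : Submodule A M) := by
  refine (h.prod h').of_surj ((Submodule.inclusion le_sup_left).coprod
    (Submodule.inclusion le_sup_right)) ?_
  rintro ⟨z, hz⟩
  obtain ⟨x, hx, y, hy, rfl⟩ := Submodule.mem_sup.1 hz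
  exact ⟨(⟨x, hx⟩, ⟨y, hy⟩), Subtype.ext (by simp)⟩

theorem Pure.sub [Subsingleton M] : Pure C M := by
  intro S hS hC P h1 h2 h3 p hp f
  ext x; exact Subsingleton.elim _ _

theorem ne_zero_of_surj {S : Type} [AddCommGroup S] [Module A S] [IsSimpleModule A S]
    (f : M →ₗ[A] S) (hf : Function.Surjective f) : f ≠ 0 := by
  rintro rfl
  have : Nontrivial S := IsSimpleModule.nontrivial A S
  obtain ⟨s, hs⟩ := exists_ne (0 : S)
  obtain ⟨x, hx⟩ := hf s
  exact hs (by simpa using hx.symm)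

variable [IsArtinianRing A] (hN : ArtinAlg.IsNakayama A)

theorem Pure.both (hN : ArtinAlg.IsNakayama A) [Module.Finite A M] (h : Pure C M) (h' : Pure (fun S => ¬ C S) M) :
    Subsingleton M := by
  by_contra hc
  rw [not_subsingleton_iff_nontrivial] at hc
  obtain ⟨S, hS, f, hf⟩ := exists_top (A := A) (M := M)
  obtain ⟨P, h1, h2, p, hp, hu, -⟩ := exists_cover (A := A) (S := S) hN
  obtain ⟨g, hg⟩ := Module.projective_lifting_property f p hf
  have hg0 : g = 0 := by
    by_cases hC : C S
    · exact h' S hS (not_not.2 hC) P h1 h2 hu p hp g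
    · exact h S hS hC P h1 h2 hu p hp g
  rw [hg0, LinearMap.comp_zero] at hg
  exact ne_zero_of_surj p hp hg.symm

theorem uni_conn (hiso : ∀ S T : ModuleCat.{0} A, Nonempty (S ≃ₗ[A] T) → (C S ↔ C T))
    (harr : ∀ S T : ModuleCat.{0} A, IsSimpleModule A S → IsSimpleModule A T → Arrow A S T →
      (C S ↔ C T)) (T : ModuleCat.{0} A) (hT : IsSimpleModule A T) :
    ∀ (n : ℕ) (M : ModuleCat.{0} A) (_ : Module.Finite A M) (_ : Uni A M) (_ : len A M = n)
     (S : ModuleCat.{0} A) (_ : IsSimpleModule A S) (f : M →ₗ[A] S) (_ : Function.Surjective f)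
     (N : Submodule A M) (g : N →ₗ[A] T) (_ : Function.Surjective g), C S ↔ C T := by
  intro n
  induction n using Nat.strong_induction_on with
  | _ n ih =>
  intro M h1 h2 h3 S hS f hf N g hg
  by_cases hNt : N = ⊤
  · subst hNt
    exact hiso S T (h2.top_unique f hf (g ∘ₗ Submodule.topEquiv.symm.toLinearMap)
      (hg.comp (LinearEquiv.surjective _)))
  · have hle := h2.le_ker f hf N hNt
    have hT' : Nontrivial T := IsSimpleModule.nontrivial A T
    have : Nontrivial N := hg.nontrivial
    have : Nontrivial (LinearMap.ker f) := (Submodule.inclusion_injective hle).nontrivial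
    obtain ⟨U, hU, u, hu⟩ := exists_top (A := A) (M := LinearMap.ker f)
    rw [harr S U hS hU ⟨M, h1, h2, f, hf, u, hu⟩]
    refine ih (len A (LinearMap.ker f)) ?_ (ModuleCat.of A (LinearMap.ker f)) inferInstance
      (h2.of_inj _ (LinearMap.ker f).subtype_injective) rfl U hU u hu
      (N.comap (LinearMap.ker f).subtype)
      (g ∘ₗ (Submodule.comapSubtypeEquivOfLe hle).toLinearMap)
      (hg.comp (LinearEquiv.surjective _))
    rw [← h3]
    exact len_lt (coatom_ker f hf).1

theorem Pure.uni (hiso : ∀ S T : ModuleCat.{0} A, Nonempty (S ≃ₗ[A] T) → (C S ↔ C T))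
    (harr : ∀ S T : ModuleCat.{0} A, IsSimpleModule A S → IsSimpleModule A T → Arrow A S T →
      (C S ↔ C T)) [Module.Finite A M] (hM : Uni A M)
      (S : ModuleCat.{0} A) (hS : IsSimpleModule A S) (f : M →ₗ[A] S) (hf : Function.Surjective f)
      (hC : C S) : Pure C M := by
  intro T hT hCT P h1 h2 h3 p hp g
  by_contra hg
  have hk : LinearMap.ker g ≤ LinearMap.ker p :=
    h3.le_ker p hp _ (fun h => hg (LinearMap.ker_eq_top.1 h))
  let u : LinearMap.range g →ₗ[A] T :=
    (LinearMap.ker g).liftQ p hk ∘ₗ g.quotKerEquivRange.symm.toLinearMap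
  have hu : Function.Surjective u := by
    intro t
    obtain ⟨x, rfl⟩ := hp t
    refine ⟨g.quotKerEquivRange (Submodule.Quotient.mk x), ?_⟩
    simp only [u, LinearMap.comp_apply, LinearEquiv.coe_coe, LinearEquiv.symm_apply_apply]
    exact Submodule.liftQ_apply _ _ _
  exact hCT ((uni_conn hiso harr T hT _ (ModuleCat.of A M) ‹_› hM rfl S hS f hf _ u hu).1 hC)

theorem decomp (hN : ArtinAlg.IsNakayama A)
    (hiso : ∀ S T : ModuleCat.{0} A, Nonempty (S ≃ₗ[A] T) → (C S ↔ C T))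
    (harr : ∀ S T : ModuleCat.{0} A, IsSimpleModule A S → IsSimpleModule A T → Arrow A S T →
      (C S ↔ C T)) : ∀ (n : ℕ) (M : Type) [AddCommGroup M] [Module A M] [Module.Finite A M]
      (_ : len A M = n), ∃ X Y : Submodule A M, X ⊔ Y = ⊤ ∧ Pure C X ∧ Pure (fun S => ¬ C S) Y := by
  intro n
  induction n using Nat.strong_induction_on with
  | _ n ih =>
  intro M _ _ _ hn
  by_cases hi : ∀ N₁ N₂ : Submodule A M, IsCompl N₁ N₂ → N₁ = ⊥ ∨ N₂ = ⊥
  · have hu := nak hN hi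
    cases subsingleton_or_nontrivial M
    · exact ⟨⊤, ⊤, by simp, Pure.sub, Pure.sub⟩
    · obtain ⟨S, hS, f, hf⟩ := exists_top (A := A) (M := M)
      by_cases hC : C S
      · refine ⟨⊤, ⊥, by simp, ?_, Pure.sub⟩
        exact (Pure.uni hiso harr hu S hS f hf hC).of_inj (Submodule.subtype _)
          (Submodule.subtype_injective _)
      · refine ⟨⊥, ⊤, by simp, Pure.sub, ?_⟩
        refine (Pure.uni (C := fun S => ¬ C S) ?_ ?_ hu S hS f hf hC).of_inj (Submodule.subtype _)
          (Submodule.subtype_injective _)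
        · intro S T h; rw [hiso S T h]
        · intro S T h1 h2 h3; rw [harr S T h1 h2 h3]
  · push Not at hi
    obtain ⟨N₁, N₂, hc, h1, h2⟩ := hi
    have h1' : N₁ ≠ ⊤ := by
      rintro rfl; exact h2 (by simpa using hc.disjoint)
    have h2' : N₂ ≠ ⊤ := by
      rintro rfl; exact h1 (by simpa using hc.disjoint)
    obtain ⟨X₁, Y₁, e₁, hX₁, hY₁⟩ := ih _ (hn ▸ len_lt h1') N₁ rfl
    obtain ⟨X₂, Y₂, e₂, hX₂, hY₂⟩ := ih _ (hn ▸ len_lt h2') N₂ rfl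
    have hm : ∀ (D : ModuleCat.{0} A → Prop) (K : Submodule A M) (X : Submodule A K), Pure D X →
        Pure D (X.map K.subtype) := by
      intro D K X h
      exact h.of_surj (Submodule.equivSubtypeMap K X).toLinearMap (LinearEquiv.surjective _)
    refine ⟨X₁.map N₁.subtype ⊔ X₂.map N₂.subtype, Y₁.map N₁.subtype ⊔ Y₂.map N₂.subtype, ?_,
      (hm _ _ _ hX₁).sup (hm _ _ _ hX₂), (hm _ _ _ hY₁).sup (hm _ _ _ hY₂)⟩
    rw [sup_sup_sup_comm, ← Submodule.map_sup, ← Submodule.map_sup, e₁, e₂]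
    simpa using hc.sup_eq_top

theorem connected (hN : ArtinAlg.IsNakayama A) (hA : ArtinAlg.IsConnectedAlgebra A)
    (C : ModuleCat.{0} A → Prop)
    (hiso : ∀ S T : ModuleCat.{0} A, Nonempty (S ≃ₗ[A] T) → (C S ↔ C T))
    (harr : ∀ S T : ModuleCat.{0} A, IsSimpleModule A S → IsSimpleModule A T → Arrow A S T →
      (C S ↔ C T)) (S₀ : ModuleCat.{0} A) (hS₀ : IsSimpleModule A S₀) (hC : C S₀)
    (S : ModuleCat.{0} A) (hS : IsSimpleModule A S) : C S := by
  obtain ⟨X, Y, hXY, hX, hY⟩ := decomp hN hiso harr _ A rfl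
  have hzero : ∀ (X Y : Submodule A A) (D : ModuleCat.{0} A → Prop), Pure D X → Pure (fun S => ¬ D S) Y →
      ∀ x ∈ X, ∀ y ∈ Y, y * x = 0 := by
    intro X Y D hX hY x hx y hy
    let φ : Y →ₗ[A] X := (LinearMap.toSpanSingleton A X ⟨x, hx⟩) ∘ₗ Y.subtype
    have h1 : Pure D (LinearMap.range φ) := hX.of_inj (Submodule.subtype _) (Submodule.subtype_injective _)
    have h2 : Pure (fun S => ¬ D S) (LinearMap.range φ) := hY.of_surj φ.rangeRestrict
      φ.surjective_rangeRestrict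
    have h3 := Pure.both hN h1 h2
    have h4 : φ.rangeRestrict ⟨y, hy⟩ = 0 := Subsingleton.elim _ _
    have h5 := congrArg (fun z : LinearMap.range φ => ((z : X) : A)) h4
    simpa [φ] using h5
  have hYX := hzero X Y C hX hY
  have hXY' := hzero Y X (fun S => ¬ C S) hY (by simpa using hX)
  obtain ⟨x, hx, y, hy, hxy⟩ := Submodule.mem_sup.1 (hXY ▸ Submodule.mem_top : (1 : A) ∈ X ⊔ Y)
  have hy' : y = 1 - x := by rw [← hxy]; simp
  have hid : IsIdempotentElem x := by
    have := hYX x hx y hy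
    rw [hy', sub_mul, one_mul, sub_eq_zero] at this
    exact this.symm
  have hcen : x ∈ Set.center A := by
    rw [Semigroup.mem_center_iff]
    intro a
    have e1 := hXY' (a * y) (Y.smul_mem a hy) x hx
    have e2 := hYX (a * x) (X.smul_mem a hx) y hy
    rw [hy', mul_sub, mul_sub, sub_eq_zero, mul_one] at e1
    rw [hy', sub_mul, one_mul, sub_eq_zero] at e2
    exact e2.trans e1.symm
  have hp : ∀ (D : ModuleCat.{0} A → Prop) (X : Submodule A A), Pure D X → (1 : A) ∈ X →
      ∀ S : ModuleCat.{0} A, IsSimpleModule A S → D S := by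
    intro D X hX h1 S hS
    by_contra hD
    have : Nontrivial S := IsSimpleModule.nontrivial A S
    obtain ⟨s, hs⟩ := exists_ne (0 : S)
    let q : X →ₗ[A] S := LinearMap.toSpanSingleton A S s ∘ₗ X.subtype
    have hq : q ≠ 0 := by
      intro h
      apply hs
      simpa [q] using LinearMap.congr_fun h ⟨1, h1⟩
    obtain ⟨P, h1, h2, p, hp, hu, -⟩ := exists_cover (A := A) (S := S) hN
    have := hX.of_surj q (surj_of_ne_zero q hq) S hS hD P h1 h2 hu p hp p
    exact ne_zero_of_surj p hp this
  rcases hA.2 x hid hcen with h0 | h0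
  · rw [h0, sub_zero] at hy'
    exact absurd hC (hp _ Y hY (hy' ▸ hy) S₀ hS₀)
  · exact hp _ X hX (h0 ▸ hx) S hS
end conn
end NakPf

namespace NakPf
section cases
variable {A : Type} [Ring A] [IsArtinianRing A]

theorem acyc_step (hN : ArtinAlg.IsNakayama A) (S : ModuleCat.{0} A) (hS : IsSimpleModule A S)
    (h : ∀ T : ModuleCat.{0} A, IsSimpleModule A T → Arrow A S T →
      ∀ (M : Type) [AddCommGroup M] [Module A M] [Module.Finite A M] (_ : Uni A M)
       (f : M →ₗ[A] T) (_ : Function.Surjective f), ∃ n, PD A M n)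
    (M : Type) [AddCommGroup M] [Module A M] [Module.Finite A M] (hM : Uni A M)
    (f : M →ₗ[A] S) (hf : Function.Surjective f) : ∃ n, PD A M n := by
  have key : ∀ (M : ModuleCat.{0} A) (_ : Module.Finite A M) (_ : Uni A M)
      (f : M →ₗ[A] S) (_ : Function.Surjective f), ∃ n, PD A (LinearMap.ker f) n := by
    intro M hfin hM f hf
    cases subsingleton_or_nontrivial (LinearMap.ker f)
    · exact ⟨0, PD.sub 0⟩
    · obtain ⟨T, hT, g, hg⟩ := exists_top (A := A) (M := LinearMap.ker f)
      exact h T hT ⟨M, hfin, hM, f, hf, g, hg⟩ _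
        (hM.of_inj _ (LinearMap.ker f).subtype_injective) g hg
  obtain ⟨P, h1, h2, p, hp, hu, -⟩ := exists_cover (A := A) (S := S) hN
  obtain ⟨n, hn⟩ := key P h1 hu p hp
  obtain ⟨m, hm⟩ := key (ModuleCat.of A M) ‹_› hM f hf
  exact ⟨max m (n + 1), PD.ext f hf _ (PD.mono (le_max_left _ _) hm)
    (PD.mono (le_max_right _ _) (PD.quot p hp n hn))⟩

/-- there is an arrow path of length `k` from the module to `S₀` -/
def Ht (S₀ : ModuleCat.{0} A) : ℕ → ModuleCat.{0} A → Prop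
  | 0, S => Nonempty (S ≃ₗ[A] S₀)
  | k + 1, S => ∃ (T : ModuleCat.{0} A) (_ : IsSimpleModule A T), Ht S₀ k T ∧ Arrow A S T

theorem Ht.congr {S₀ S T : ModuleCat.{0} A} (e : S ≃ₗ[A] T) {k : ℕ} (h : Ht S₀ k S) : Ht S₀ k T := by
  cases k with
  | zero => obtain ⟨e'⟩ := h; exact ⟨e.symm ≪≫ₗ e'⟩
  | succ k =>
    obtain ⟨U, hU, h1, h2⟩ := h
    exact ⟨U, hU, h1, h2.congr e (LinearEquiv.refl _ _)⟩

theorem acyc (hN : ArtinAlg.IsNakayama A) (hA : ArtinAlg.IsConnectedAlgebra A)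
    (S₀ : ModuleCat.{0} A) (hS₀ : IsSimpleModule A S₀)
    (h0 : ∀ T : ModuleCat.{0} A, IsSimpleModule A T → ¬ Arrow A S₀ T) :
    ∀ S : ModuleCat.{0} A, IsSimpleModule A S → ∃ n, PD A S n := by
  have hsucc : ∀ (k : ℕ) (S T : ModuleCat.{0} A), IsSimpleModule A S → IsSimpleModule A T →
      Arrow A S T → Ht S₀ k S → ∃ k', k = k' + 1 ∧ Ht S₀ k' T := by
    intro k S T hS hT hST h
    cases k with
    | zero =>
      obtain ⟨e⟩ := h
      exact absurd (hST.congr e (LinearEquiv.refl _ _)) (h0 T hT)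
    | succ k =>
      obtain ⟨U, hU, h1, h2⟩ := h
      obtain ⟨e⟩ := h2.right_unique hN hST
      exact ⟨k, rfl, h1.congr e⟩
  have hall : ∀ S : ModuleCat.{0} A, IsSimpleModule A S → ∃ k, Ht S₀ k S := by
    intro S hS
    refine connected hN hA (fun S => ∃ k, Ht S₀ k S) ?_ ?_ S₀ hS₀ ⟨0, ⟨LinearEquiv.refl _ _⟩⟩ S hS
    · rintro S T ⟨e⟩
      exact ⟨fun ⟨k, h⟩ => ⟨k, h.congr e⟩, fun ⟨k, h⟩ => ⟨k, h.congr e.symm⟩⟩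
    · intro S T hS hT hST
      constructor
      · rintro ⟨k, h⟩
        obtain ⟨k', -, h'⟩ := hsucc k S T hS hT hST h
        exact ⟨k', h'⟩
      · rintro ⟨k, h⟩
        exact ⟨k + 1, T, hT, h, hST⟩
  have hpd : ∀ (k : ℕ) (S : ModuleCat.{0} A), IsSimpleModule A S → Ht S₀ k S →
      ∀ (M : Type) [AddCommGroup M] [Module A M] [Module.Finite A M] (_ : Uni A M)
       (f : M →ₗ[A] S) (_ : Function.Surjective f), ∃ n, PD A M n := by
    intro k
    induction k with
    | zero =>
      intro S hS h
      refine acyc_step hN S hS ?_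
      intro T hT hST
      obtain ⟨k', hk, -⟩ := hsucc 0 S T hS hT hST h
      omega
    | succ k ih =>
      intro S hS h
      refine acyc_step hN S hS ?_
      intro T hT hST
      obtain ⟨k', hk, h'⟩ := hsucc (k + 1) S T hS hT hST h
      obtain rfl : k = k' := by omega
      exact ih T hT h'
  intro S hS
  obtain ⟨k, hk⟩ := hall S hS
  refine hpd k S hS hk S ?_ LinearMap.id Function.surjective_id
  intro N₁ N₂
  rcases eq_bot_or_eq_top N₁ with rfl | rfl
  · left; exact bot_le
  · right; exact le_top

/-- cyclic data -/
structure Cyc (A : Type) [Ring A] where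
  n : ℕ
  hn : 0 < n
  S : ℤ → ModuleCat.{0} A
  simple : ∀ i, IsSimpleModule A (S i)
  P : ℤ → ModuleCat.{0} A
  fin : ∀ i, Module.Finite A (P i)
  proj : ∀ i, Module.Projective A (P i)
  uni : ∀ i, Uni A (P i)
  p : ∀ i, P i →ₗ[A] S i
  surj : ∀ i, Function.Surjective (p i)
  per : ∀ i, len A (P (i + n)) = len A (P i)
  arr : ∀ i, Arrow A (S i) (S (i + 1))
  all : ∀ T : ModuleCat.{0} A, IsSimpleModule A T → ∃ i, Nonempty (T ≃ₗ[A] S i)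

theorem exists_cyc (hN : ArtinAlg.IsNakayama A) (hA : ArtinAlg.IsConnectedAlgebra A)
    (h : ∀ S : ModuleCat.{0} A, IsSimpleModule A S →
      ∃ T : ModuleCat.{0} A, IsSimpleModule A T ∧ Arrow A S T) : Nonempty (Cyc A) := by
  have := hA.1
  obtain ⟨S₀, hS₀, -⟩ := exists_top (A := A) (M := A)
  choose! σ hσ using h
  let s : ℕ → ModuleCat.{0} A := fun i => σ^[i] S₀
  have hs1 : ∀ i, s (i + 1) = σ (s i) := fun i => Function.iterate_succ_apply' σ i S₀
  have hs : ∀ i, IsSimpleModule A (s i) := by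
    intro i
    induction i with
    | zero => exact hS₀
    | succ i ih => rw [hs1]; exact (hσ _ ih).1
  have har : ∀ i, Arrow A (s i) (s (i + 1)) := by
    intro i; rw [hs1]; exact (hσ _ (hs i)).2
  obtain ⟨i, j, hij, hiso⟩ := pigeon s hs
  have hdesc : ∀ i k, Nonempty (s i ≃ₗ[A] s (k + i)) → Nonempty (s 0 ≃ₗ[A] s k) := by
    intro i
    induction i with
    | zero => intro k h; exact h
    | succ i ih =>
      rintro k ⟨e⟩
      refine ih k ?_
      exact ((har i).congr (LinearEquiv.refl _ _) e).left_unique hN (har (k + i))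
  obtain ⟨n, rfl⟩ : ∃ n, j = n + i := ⟨j - i, by omega⟩
  have hn : 0 < n := by omega
  obtain ⟨e⟩ := hdesc i n hiso
  have hper : Arrow A (s (n - 1)) (s 0) := by
    have := har (n - 1)
    rw [Nat.sub_add_cancel hn] at this
    exact this.congr (LinearEquiv.refl _ _) e.symm
  let S : ℤ → ModuleCat.{0} A := fun i => s (i % n).toNat
  have hSs : ∀ i, IsSimpleModule A (S i) := fun i => hs _
  have harS : ∀ i, Arrow A (S i) (S (i + 1)) := by
    intro i
    have h0 : 0 ≤ i % n := Int.emod_nonneg _ (by omega)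
    have h1 : i % n < n := Int.emod_lt_of_pos _ (by omega)
    by_cases hc : i % n = n - 1
    · have e1 : (i % n).toNat = n - 1 := by omega
      have e2 : ((i + 1) % n).toNat = 0 := by
        rw [Int.add_emod, hc]
        rcases Nat.lt_or_ge 1 n with h | h
        · rw [Int.emod_eq_of_lt (a := 1) (by omega) (by omega)]; simp
        · obtain rfl : n = 1 := by omega
          simp
      have e3 : S i = s (n - 1) := congrArg s e1
      have e4 : S (i + 1) = s 0 := congrArg s e2
      rw [e3, e4]; exact hper
    · have e2 : ((i + 1) % n).toNat = (i % n).toNat + 1 := by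
        rw [Int.add_emod, Int.emod_eq_of_lt (a := 1) (by omega) (by omega),
          Int.emod_eq_of_lt (by omega) (by omega)]
        omega
      have e4 : S (i + 1) = s ((i % n).toNat + 1) := congrArg s e2
      rw [e4]; exact har _
  have hSper : ∀ i, S (i + n) = S i := by intro i; simp [S]
  choose P h1 h2 p hp hu hl using fun S : {S : ModuleCat.{0} A // IsSimpleModule A S} =>
    have := S.2
    exists_cover (A := A) (S := S.1) hN
  refine ⟨⟨n, hn, S, hSs, fun i => P ⟨S i, hSs i⟩, fun i => h1 _, fun i => h2 _, fun i => hu _,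
    fun i => p ⟨S i, hSs i⟩, fun i => hp _, ?_, harS, ?_⟩⟩
  · intro i
    have : (⟨S (i + n), hSs _⟩ : {S : ModuleCat.{0} A // IsSimpleModule A S}) = ⟨S i, hSs i⟩ :=
      Subtype.ext (hSper i)
    rw [this]
  · intro T hT
    refine connected hN hA (fun T => ∃ i, Nonempty (T ≃ₗ[A] S i)) ?_ ?_ (S 0) (hSs 0)
      ⟨0, ⟨LinearEquiv.refl _ _⟩⟩ T hT
    · rintro S T ⟨e⟩
      exact ⟨fun ⟨k, ⟨h⟩⟩ => ⟨k, ⟨e.symm ≪≫ₗ h⟩⟩, fun ⟨k, ⟨h⟩⟩ => ⟨k, ⟨e ≪≫ₗ h⟩⟩⟩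
    · intro X Y hX hY hXY
      constructor
      · rintro ⟨i, ⟨e⟩⟩
        have := hSs (i + 1)
        have := hSs i
        exact ⟨i + 1, (hXY.congr e (LinearEquiv.refl _ _)).right_unique hN (harS i)⟩
      · rintro ⟨i, ⟨e⟩⟩
        have := hSs (i - 1)
        have := hSs i
        have h3 := harS (i - 1)
        rw [sub_add_cancel] at h3
        exact ⟨i - 1, (hXY.congr (LinearEquiv.refl _ _) e).left_unique hN h3⟩
end cases
end NakPf

namespace NakPf
section typ
variable {A : Type} [Ring A] [IsArtinianRing A]

attribute [instance] Cyc.simple Cyc.fin Cyc.proj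

/-- the resolution quiver type function -/
def Cyc.f (D : Cyc A) (i : ℤ) : ℤ := i + len A (D.P i)

/-- uniserial of length `l` with top `S a` -/
def Typ (D : Cyc A) (a : ℤ) (l : ℕ) (M : Type) [AddCommGroup M] [Module A M] : Prop :=
  Module.Finite A M ∧ Uni A M ∧ len A M = l ∧
    (l = 0 ∨ ∃ g : M →ₗ[A] D.S a, Function.Surjective g)

variable {D : Cyc A} {M N : Type} [AddCommGroup M] [Module A M] [AddCommGroup N] [Module A N]

theorem Typ.congr {a : ℤ} {l : ℕ} (h : Typ D a l M) (e : M ≃ₗ[A] N) : Typ D a l N := by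
  obtain ⟨h1, h2, h3, h4⟩ := h
  refine ⟨Module.Finite.equiv e, h2.of_surj e.toLinearMap e.surjective, (len_congr e).symm.trans h3, ?_⟩
  rcases h4 with h4 | ⟨g, hg⟩
  · exact Or.inl h4
  · exact Or.inr ⟨g ∘ₗ e.symm.toLinearMap, hg.comp e.symm.surjective⟩

theorem Typ.cov (a : ℤ) : Typ D a (len A (D.P a)) (D.P a) :=
  ⟨D.fin a, D.uni a, rfl, Or.inr ⟨D.p a, D.surj a⟩⟩

theorem Typ.rad (hN : ArtinAlg.IsNakayama A) {a : ℤ} {l : ℕ} (h : Typ D a (l + 1) M)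
    (g : M →ₗ[A] D.S a) (hg : Function.Surjective g) : Typ D (a + 1) l (LinearMap.ker g) := by
  obtain ⟨h1, h2, h3, -⟩ := h
  have hl := len_ker g hg
  rw [len_simple (S := D.S a)] at hl
  refine ⟨inferInstance, h2.of_inj _ (LinearMap.ker g).subtype_injective, by omega, ?_⟩
  cases subsingleton_or_nontrivial (LinearMap.ker g)
  · left
    have := (len_eq_zero (A := A) (M := LinearMap.ker g)).2 ‹_›
    omega
  · right
    obtain ⟨T, hT, u, hu⟩ := exists_top (A := A) (M := LinearMap.ker g)
    have ha : Arrow A (D.S a) T := ⟨ModuleCat.of A M, h1, h2, g, hg, u, hu⟩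
    obtain ⟨e⟩ := ha.right_unique hN (D.arr a)
    exact ⟨e.toLinearMap ∘ₗ u, e.surjective.comp hu⟩

theorem Typ.sub (hN : ArtinAlg.IsNakayama A) (l : ℕ) : ∀ (a : ℤ) (M : Type) [AddCommGroup M]
    [Module A M] (_ : Typ D a l M) (K : Submodule A M) (b : ℤ), b + len A K = a + l →
    Typ D b (len A K) K := by
  induction l with
  | zero =>
    intro a M _ _ h K b hb
    have := h.1
    have h3 : Subsingleton M := len_eq_zero.1 h.2.2.1
    have h4 : len A K = 0 := len_eq_zero.2 inferInstance
    exact ⟨inferInstance, h.2.1.of_inj _ K.subtype_injective, rfl, Or.inl h4⟩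
  | succ l ih =>
    intro a M _ _ h K b hb
    have hfin := h.1
    by_cases hK : K = ⊤
    · subst hK
      have hl : len A (⊤ : Submodule A M) = l + 1 := len_top.trans h.2.2.1
      rw [hl] at hb ⊢
      obtain rfl : b = a := by omega
      exact h.congr Submodule.topEquiv.symm
    · obtain ⟨g, hg⟩ := h.2.2.2.resolve_left (by omega)
      have hle := h.2.1.le_ker g hg K hK
      have e := Submodule.comapSubtypeEquivOfLe hle
      have hlen := len_congr e
      have := ih (a + 1) _ (h.rad hN g hg) (K.comap (LinearMap.ker g).subtype) b
        (by rw [hlen]; push_cast at hb ⊢; omega)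
      rw [hlen] at this
      exact this.congr e

theorem Typ.ex (hN : ArtinAlg.IsNakayama A) {a : ℤ} {l : ℕ} (h : Typ D a l M) (hl : l ≠ 0) :
    ∃ q : D.P a →ₗ[A] M, Function.Surjective q ∧ len A (D.P a) = len A (LinearMap.ker q) + l ∧
      Typ D (a + l) (len A (LinearMap.ker q)) (LinearMap.ker q) := by
  have hfin := h.1
  obtain ⟨g, hg⟩ := h.2.2.2.resolve_left hl
  obtain ⟨q, hq⟩ := Module.projective_lifting_property g (D.p a) hg
  have hqs : Function.Surjective q :=
    h.2.1.surj g q (by rw [hq]; exact ne_zero_of_surj _ (D.surj a))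
  have hlen := len_ker q hqs
  rw [h.2.2.1] at hlen
  exact ⟨q, hqs, hlen, Typ.sub hN _ a _ (Typ.cov a) _ _ (by rw [hlen]; push_cast; ring)⟩

theorem Typ.pd (hN : ArtinAlg.IsNakayama A) (d : ℕ) : ∀ (a : ℤ) (l : ℕ) (M : Type) [AddCommGroup M]
    [Module A M] (_ : Typ D a l M), PD A M d ↔ Z D.f d a (a + l) := by
  induction d with
  | zero =>
    intro a l M _ _ h
    have hfin := h.1
    rw [PD.zero_iff, ← len_eq_zero (A := A), h.2.2.1]
    simp only [Z]
    omega
  | succ d ih =>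
    intro a l M _ _ h
    have hfin := h.1
    by_cases hl : l = 0
    · have : Subsingleton M := len_eq_zero.1 (h.2.2.1.trans hl)
      simp only [Z]
      exact ⟨fun _ => Or.inl (by omega), fun _ => PD.sub _⟩
    · obtain ⟨q, hq, hlen, hk⟩ := h.ex hN hl
      have e : D.f a = (a + l) + len A (LinearMap.ker q) := by
        rw [Cyc.f, hlen]; push_cast; ring
      have hZ : Z D.f (d + 1) a (a + l) ↔ Z D.f d (a + l) (D.f a) := by
        simp only [Z]
        constructor
        · rintro (h | h)
          · omega
          · exact h
        · exact Or.inr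
      rw [hZ, e, ← ih _ _ _ hk]
      refine ⟨?_, PD.quot q hq d⟩
      cases d with
      | succ d => exact PD.ker q hq d
      | zero =>
        intro hM
        have hproj : Module.Projective A M := PD.one_iff.1 hM
        rw [PD.zero_iff]
        obtain ⟨g, hg⟩ := h.2.2.2.resolve_left hl
        obtain ⟨s, hs⟩ := Module.projective_lifting_property q LinearMap.id hq
        have hss : Function.Surjective s := by
          refine (D.uni a).surj (g ∘ₗ q) s ?_
          rw [LinearMap.comp_assoc, hs]
          exact ne_zero_of_surj _ hg
        refine ⟨fun x y => ?_⟩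
        have hz : ∀ x : LinearMap.ker q, x = 0 := by
          rintro ⟨x, hx⟩
          obtain ⟨m, rfl⟩ := hss x
          have h1 : q (s m) = m := LinearMap.congr_fun hs m
          have h2 : m = 0 := h1.symm.trans hx
          exact Subtype.ext (by simp [h2])
        rw [hz x, hz y]

theorem Cyc.lt (D : Cyc A) (x : ℤ) : x < D.f x := by
  have : Nontrivial (D.S x) := IsSimpleModule.nontrivial A _
  have : Nontrivial (D.P x) := (D.surj x).nontrivial
  have := len_pos (A := A) (M := D.P x)
  rw [Cyc.f]; omega

theorem Cyc.mono (hN : ArtinAlg.IsNakayama A) (D : Cyc A) : Monotone D.f := by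
  refine monotone_int_of_le_succ fun i => ?_
  have h0 := D.lt i
  have h1 := D.lt (i + 1)
  rw [Cyc.f] at h0
  obtain ⟨l, hl⟩ : ∃ l, len A (D.P i) = l + 1 := ⟨len A (D.P i) - 1, by omega⟩
  have ht : Typ D i (l + 1) (D.P i) := hl ▸ Typ.cov i
  have hr := ht.rad hN (D.p i) (D.surj i)
  by_cases hl0 : l = 0
  · rw [Cyc.f]; omega
  · obtain ⟨q, -, hq, -⟩ := hr.ex hN hl0
    rw [Cyc.f, Cyc.f]; omega

theorem Cyc.fper (D : Cyc A) (x : ℤ) : D.f (x + D.n) = D.f x + D.n := by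
  rw [Cyc.f, Cyc.f, D.per]; ring

theorem Typ.simple (i : ℤ) {S : Type} [AddCommGroup S] [Module A S] [IsSimpleModule A S]
    (e : S ≃ₗ[A] D.S i) : Typ D i 1 S := by
  refine ⟨inferInstance, ?_, len_simple, Or.inr ⟨e.toLinearMap, e.surjective⟩⟩
  intro N₁ N₂
  rcases eq_bot_or_eq_top N₁ with rfl | rfl
  · left; exact bot_le
  · right; exact le_top

theorem cyc_fin (hN : ArtinAlg.IsNakayama A) (D : Cyc A) (i : ℤ) (k : ℕ)
    (h : D.f^[k] (i + 1) = D.f^[k + 1] i) (S : ModuleCat.{0} A) (hS : IsSimpleModule A S) :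
    ∃ n, PD A S n := by
  obtain ⟨j, ⟨e⟩⟩ := D.all S hS
  obtain ⟨m, hm⟩ := comb_main D.f (D.mono hN) D.lt D.n D.hn D.fper i k h j
  have := Z_of D.f m j (j + 1) hm
  exact ⟨_, (Typ.pd hN _ j 1 S (Typ.simple j e)).2 (by exact_mod_cast this)⟩

theorem cyc_even (hN : ArtinAlg.IsNakayama A) (D : Cyc A) 
    (S : ModuleCat.{0} A) (hS : IsSimpleModule A S) (n : ℕ) (hn : ArtinAlg.projDim A S = n)
    (he : Even n) : ∃ i k, D.f^[k] (i + 1) = D.f^[k + 1] i := by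
  have := IsSimpleModule.nontrivial A S
  obtain ⟨h1, h2⟩ := projDim_eq S hn
  obtain ⟨j, ⟨e⟩⟩ := D.all S hS
  rw [Typ.pd hN _ j 1 S (Typ.simple j e)] at h1 h2
  obtain ⟨k, rfl⟩ := he.exists_two_nsmul
  rw [smul_eq_mul] at h1 h2
  exact ⟨j, k, by exact_mod_cast Z_even D.f k _ _ h1 h2⟩

theorem uni_len (hN : ArtinAlg.IsNakayama A) [Module.Finite A M] (h : Uni A M) : 
    len A M ≤ len A A := by
  cases subsingleton_or_nontrivial M
  · rw [len_eq_zero.2 ‹_›]; exact Nat.zero_le _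
  · obtain ⟨S, hS, f, hf⟩ := exists_top (A := A) (M := M)
    obtain ⟨P, h1, h2, p, hp, hu, hl⟩ := exists_cover (A := A) (S := S) hN
    obtain ⟨q, hq⟩ := Module.projective_lifting_property f p hf
    have hqs : Function.Surjective q :=
      h.surj f q (by rw [hq]; exact ne_zero_of_surj _ hp)
    have := len_ker q hqs
    omega

/-- essential extensions of simples are uniserial of finite length -/
theorem env_uni (hN : ArtinAlg.IsNakayama A) (S : Submodule A M) (hS : S ≠ ⊥)
    (h : ∀ K : Submodule A M, K ≠ ⊥ → S ≤ K) : Module.Finite A M ∧ Uni A M := by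
  have hfg : ∀ N : Submodule A M, N.FG → Uni A N := by
    intro N hNf
    have : Module.Finite A N := Module.Finite.iff_fg.2 hNf
    refine nak hN ?_
    intro N₁ N₂ hc
    by_contra hcon
    push Not at hcon
    have hne : ∀ L : Submodule A N, L ≠ ⊥ → S ≤ L.map N.subtype := by
      intro L hL
      refine h _ ?_
      intro hb
      apply hL
      exact Submodule.map_injective_of_injective N.subtype_injective (hb.trans (Submodule.map_bot _).symm)
    have h1 := le_inf (hne N₁ hcon.1) (hne N₂ hcon.2)
    rw [← Submodule.map_inf _ N.subtype_injective, hc.inf_eq_bot, Submodule.map_bot] at h1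
    exact hS (le_bot_iff.1 h1)
  let Q : Set ℕ := {n | ∃ N : Submodule A M, N.FG ∧ len A N = n}
  have hb : BddAbove Q := by
    refine ⟨len A A, ?_⟩
    rintro _ ⟨N, hNf, rfl⟩
    have : Module.Finite A N := Module.Finite.iff_fg.2 hNf
    exact uni_len hN (hfg N hNf)
  obtain ⟨N, hNf, hNl⟩ := Nat.sSup_mem (s := Q) ⟨_, ⊥, Submodule.fg_bot, rfl⟩ hb
  have htop : N = ⊤ := by
    rw [eq_top_iff]
    intro x _
    have hf2 : (N ⊔ Submodule.span A {x}).FG := hNf.sup (Submodule.fg_span_singleton x)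
    have hle : len A (N ⊔ Submodule.span A {x} : Submodule A M) ≤ len A N := by
      rw [hNl]; exact le_csSup hb ⟨_, hf2, rfl⟩
    have : Module.Finite A (N ⊔ Submodule.span A {x} : Submodule A M) := Module.Finite.iff_fg.2 hf2
    by_contra hx
    have hlt : N.comap (N ⊔ Submodule.span A {x}).subtype ≠ ⊤ := by
      intro ht
      rw [Submodule.comap_subtype_eq_top] at ht
      exact hx (ht (Submodule.mem_sup_right (Submodule.mem_span_singleton_self x)))
    have h1 := len_lt hlt
    rw [len_congr (Submodule.comapSubtypeEquivOfLe le_sup_left)] at h1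
    omega
  subst htop
  exact ⟨⟨hNf⟩, (hfg ⊤ hNf).of_surj Submodule.topEquiv.toLinearMap (LinearEquiv.surjective _)⟩

theorem inj_bound (hN : ArtinAlg.IsNakayama A) (D : Cyc A) (I : ModuleCat.{0} A)
    (hI : Injective I) (i : ℤ) (l : ℕ) (hl : l ≠ 0) (h : Typ D i l I) :
    D.f (i - 1) ≤ i + l - 1 := by
  by_contra hc
  rw [Cyc.f] at hc
  have hfin := h.1
  obtain ⟨c, hcl⟩ : ∃ c, len A (D.P (i - 1)) = c + 1 := ⟨len A (D.P (i - 1)) - 1, by omega⟩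
  have ht : Typ D (i - 1) (c + 1) (D.P (i - 1)) := hcl ▸ Typ.cov (i - 1)
  have hr := ht.rad hN (D.p (i - 1)) (D.surj (i - 1))
  rw [sub_add_cancel] at hr
  obtain ⟨q', hq's, hq', -⟩ := hr.ex hN (by omega)
  obtain ⟨q, hqs, hq, -⟩ := h.ex hN hl
  have hle : LinearMap.ker q' ≤ LinearMap.ker q := by
    rcases D.uni i (LinearMap.ker q') (LinearMap.ker q) with h1 | h1
    · exact h1
    · have := len_mono h1
      have : len A (LinearMap.ker q) = len A (LinearMap.ker q') := by omega
      rw [(D.uni i).eq_of_len this]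
  let u : LinearMap.ker (D.p (i - 1)) →ₗ[A] I :=
    (LinearMap.ker q').liftQ q hle ∘ₗ (q'.quotKerEquivOfSurjective hq's).symm.toLinearMap
  have hu : Function.Surjective u := by
    intro t
    obtain ⟨x, rfl⟩ := hqs t
    refine ⟨q'.quotKerEquivOfSurjective hq's (Submodule.Quotient.mk x), ?_⟩
    simp only [u, LinearMap.comp_apply, LinearEquiv.coe_coe, LinearEquiv.symm_apply_apply]
    exact Submodule.liftQ_apply _ _ _
  have hmono : Mono (ModuleCat.ofHom (LinearMap.ker (D.p (i - 1))).subtype) :=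
    (ModuleCat.mono_iff_injective _).2 (Submodule.subtype_injective _)
  obtain ⟨v', hv'⟩ := Injective.factors (J := I) (ModuleCat.ofHom u)
    (ModuleCat.ofHom (LinearMap.ker (D.p (i - 1))).subtype)
  let v : D.P (i - 1) →ₗ[A] I := v'.hom
  have hv : ∀ x : LinearMap.ker (D.p (i - 1)), v x = u x := fun x => by
    have := congrArg (fun z => z.hom x) hv'
    simpa using this
  have hnt : (LinearMap.ker (D.p (i - 1))) ≠ ⊤ := (coatom_ker _ (D.surj (i - 1))).1
  rcases D.uni (i - 1) (LinearMap.ker (D.p (i - 1))) (LinearMap.ker v) with h1 | h1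
  · have hsub : Subsingleton I := by
      refine ⟨fun a b => ?_⟩
      obtain ⟨a, rfl⟩ := hu a
      obtain ⟨b, rfl⟩ := hu b
      rw [← hv, ← hv, h1 a.2, h1 b.2]
    exact hl (h.2.2.1.symm.trans (len_eq_zero.2 hsub))
  · apply hnt
    rw [eq_top_iff]
    intro x _
    obtain ⟨y, hy⟩ := hu (v x)
    have : x - y ∈ LinearMap.ker v := by
      rw [LinearMap.mem_ker, map_sub, hv, hy, sub_self]
    have h2 := Submodule.add_mem _ (h1 this) y.2
    simpa using h2

theorem cyc_odd (hN : ArtinAlg.IsNakayama A) (D : Cyc A) 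
    (S : ModuleCat.{0} A) (hS : IsSimpleModule A S) (I : ModuleCat.{0} A)
    (hI : ArtinAlg.IsInjEnvOf A S I) (n : ℕ) (hn : ArtinAlg.projDim A I = n)
    (ho : Odd n) : ∃ i k, D.f^[k] (i + 1) = D.f^[k + 1] i := by
  obtain ⟨φ, hinj, hmono, hess⟩ := hI
  have hφ : Function.Injective φ.hom := (ModuleCat.mono_iff_injective _).1 hmono
  have := IsSimpleModule.nontrivial A S
  have hIn : Nontrivial I := hφ.nontrivial
  have hu := env_uni hN (LinearMap.range φ.hom)
    (by
      intro h
      rw [LinearMap.range_eq_bot] at h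
      obtain ⟨s, hs⟩ := exists_ne (0 : S)
      apply hs
      apply hφ
      rw [h]; simp)
    (by
      intro K hK
      have hcases := eq_bot_or_eq_top (LinearMap.ker (K.mkQ ∘ₗ φ.hom))
      rcases hcases with hb | ht
      · exfalso
        apply hK
        have h1 : Mono (φ ≫ ModuleCat.ofHom K.mkQ) :=
          (ModuleCat.mono_iff_injective _).2 (LinearMap.ker_eq_bot.1 hb)
        have h2 := (ModuleCat.mono_iff_injective _).1 (hess _ (ModuleCat.ofHom K.mkQ) h1)
        have h3 : LinearMap.ker K.mkQ = ⊥ := LinearMap.ker_eq_bot.2 h2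
        rwa [Submodule.ker_mkQ] at h3
      · rintro _ ⟨s, rfl⟩
        have : s ∈ LinearMap.ker (K.mkQ ∘ₗ φ.hom) := ht ▸ Submodule.mem_top
        simpa using this)
  have hfin := hu.1
  obtain ⟨T, hT, g, hg⟩ := exists_top (A := A) (M := I)
  obtain ⟨i, ⟨e⟩⟩ := D.all T hT
  have htyp : Typ D i (len A I) I :=
    ⟨hu.1, hu.2, rfl, Or.inr ⟨e.toLinearMap ∘ₗ g, e.surjective.comp hg⟩⟩
  have hpos := len_pos (A := A) (M := I)
  have hb := inj_bound hN D I hinj i _ (by omega) htyp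
  obtain ⟨h1, h2⟩ := projDim_eq I hn
  rw [Typ.pd hN _ i _ I htyp] at h1 h2
  obtain ⟨k, rfl⟩ := ho
  have hz := Z_odd D.f k _ _ h1 h2
  exact ⟨i - 1, k + 1, comb_inj D.f (D.mono hN) D.lt i _ (k + 1) hz hb⟩

end typ
end NakPf


open ArtinAlg in
/-- Let `A` be a connected Nakayama algebra. If there exists a simple
module `S` such that `pd S` is finite and even, or such that `pd (I S)` is finite and
odd, then `A` has finite global dimension. -/
theorem statement_13 (R : Type) [CommRing R] [IsArtinianRing R]
    (A : Type) [Ring A] [Algebra R A] [Module.Finite R A]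
    (hNak : IsNakayama A) (hConn : IsConnectedAlgebra A)
    (S : ModuleCat.{0} A) (hS : IsSimpleModule A ↥S)
    (I : ModuleCat.{0} A) (hI : IsInjEnvOf A S I)
    (h : (∃ n : ℕ, projDim A S = n ∧ Even n) ∨ (∃ n : ℕ, projDim A I = n ∧ Odd n)) :
    ∃ n : ℕ, ∀ M : ModuleCat.{0} A, projDim A M ≤ n := by
  have hart : IsArtinianRing A := IsArtinianRing.of_finite R A
  refine NakPf.gldim ?_
  by_cases hs : ∀ S : ModuleCat.{0} A, IsSimpleModule A S →
      ∃ T : ModuleCat.{0} A, IsSimpleModule A T ∧ NakPf.Arrow A S T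
  · obtain ⟨D⟩ := NakPf.exists_cyc hNak hConn hs
    have key : ∃ i k, D.f^[k] (i + 1) = D.f^[k + 1] i := by
      rcases h with ⟨n, hn, he⟩ | ⟨n, hn, ho⟩
      · exact NakPf.cyc_even hNak D S hS n hn he
      · exact NakPf.cyc_odd hNak D S hS I hI n hn ho
    obtain ⟨i, k, hik⟩ := key
    exact NakPf.cyc_fin hNak D i k hik
  · push Not at hs
    obtain ⟨S₀, hS₀, h0⟩ := hs
    exact NakPf.acyc hNak hConn S₀ hS₀ h0
end
end
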